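/- arXiv:2402.15503 — 9 statements merged into one kernel-verified Lean document; each statement's English description precedes it below -/
import Mathlib

section
/- Let n ≥ 1 and λ > n/2 be real. Let u : ℝⁿ → ℝ be a C^∞ function with compact support whose support is disjoint from some neighborhood of the origin (0 ∉ tsupport u). Then ∫_{ℝⁿ} |u(x)|²/|x|^{2λ} dv ≤ (4/(2λ−n)²) ∫_{ℝⁿ} |∇u(x)|²/|x|^{2λ−2} dv, where dv is Lebesgue measure. -/
/-!
The proof is integration by parts against the radial vector field `x`, followed by Young's
inequality.

The function `w = u² |x|^{-2λ}` is `C¹` with compact support on all of `ℝⁿ`, because `u` vanishes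
near the origin. Summing the coordinatewise integrations by parts of `xᵢ ∂ᵢ w` gives
`∫ ∇w · x = -n ∫ w` (`integral_fderiv_apply_self`). Since
`∇w · x = 2 u (∇u · x) |x|^{-2λ} - 2λ w`, this reads
`(2λ - n) ∫ w = ∫ 2 u (∇u · x) |x|^{-2λ}`. With `a = (2λ - n)/2 > 0`, the last integrand is at most
`a w + a⁻¹ |∇u|² |x|^{2 - 2λ}` pointwise (`two_mul_fderiv_apply_self_le`), so
`a ∫ w ≤ a⁻¹ ∫ |∇u|² |x|^{2 - 2λ}`, which is the claim.
-/

open MeasureTheory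

/-- Integration by parts against the radial field `x`, whose divergence is `n`. -/
lemma integral_fderiv_apply_self (n : ℕ) (w : EuclideanSpace ℝ (Fin n) → ℝ)
    (hw : ContDiff ℝ 1 w) (hc : HasCompactSupport w) :
    ∫ x, fderiv ℝ w x x = -(n : ℝ) * ∫ x, w x := by
  let e : Fin n → EuclideanSpace ℝ (Fin n) := fun i => EuclideanSpace.single i (1 : ℝ)
  let p : Fin n → EuclideanSpace ℝ (Fin n) →L[ℝ] ℝ := fun i => EuclideanSpace.proj i
  have hpe : ∀ i, p i (e i) = 1 := fun i => by simp [p, e]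
  have hdc : Continuous (fderiv ℝ w) := hw.continuous_fderiv one_ne_zero
  have hds : HasCompactSupport (fderiv ℝ w) := hc.fderiv ℝ
  have hint : ∀ i, Integrable (fun x => p i x * fderiv ℝ w x (e i)) := fun i => by
    refine Continuous.integrable_of_hasCompactSupport (by fun_prop) ?_
    exact (hc.fderiv_apply ℝ (e i)).mul_left
  have hsum : ∀ x, fderiv ℝ w x x = ∑ i, p i x * fderiv ℝ w x (e i) := fun x => by
    have hx := congrArg (fderiv ℝ w x) ((EuclideanSpace.basisFun (Fin n) ℝ).sum_repr x)
    rw [map_sum] at hx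
    rw [← hx]
    simp [p, e]
  have hparts : ∀ i, ∫ x, p i x * fderiv ℝ w x (e i) = - ∫ x, w x := fun i => by
    rw [integral_mul_fderiv_eq_neg_fderiv_mul_of_integrable (f := fun x => p i x) (g := w)]
    · simp [hpe]
    · simpa [hpe] using hw.continuous.integrable_of_hasCompactSupport hc
    · exact hint i
    · exact Continuous.integrable_of_hasCompactSupport (by fun_prop) hc.mul_left
    · exact fun x _ => (p i).differentiableAt
    · exact fun x _ => hw.differentiable one_ne_zero x
  simp_rw [hsum]
  rw [integral_finsetSum _ (fun i _ => hint i)]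
  simp [hparts]

/-- Multiplying by a power of `|x|` preserves `C^k` regularity of a function vanishing
near the origin. -/
lemma contDiff_mul_norm_rpow {n : ℕ} {k : ℕ∞} {h : EuclideanSpace ℝ (Fin n) → ℝ}
    (hh : ContDiff ℝ k h) (h0 : (0 : EuclideanSpace ℝ (Fin n)) ∉ tsupport h) (s : ℝ) :
    ContDiff ℝ k (fun x => h x * ‖x‖ ^ s) := by
  refine contDiff_iff_contDiffAt.2 fun x => ?_
  by_cases hx0 : x = 0
  · subst hx0
    refine (contDiffAt_const (c := (0 : ℝ))).congr_of_eventuallyEq ?_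
    filter_upwards [notMem_tsupport_iff_eventuallyEq.1 h0] with y hy
    simp [hy]
  exact hh.contDiffAt.mul
    ((contDiffAt_norm ℝ hx0).rpow_const_of_ne (norm_ne_zero_iff.2 hx0))

/-- The pointwise Young inequality, with `a` the free weight. -/
lemma two_mul_fderiv_apply_self_le {n : ℕ} (lam a : ℝ) (ha : 0 < a)
    {x : EuclideanSpace ℝ (Fin n)} (hx : x ≠ 0) (L : EuclideanSpace ℝ (Fin n) →L[ℝ] ℝ) (t : ℝ) :
    2 * t * L x * ‖x‖ ^ (-(2 * lam)) ≤
      a * (t ^ 2 * ‖x‖ ^ (-(2 * lam))) + a⁻¹ * (‖L‖ ^ 2 * ‖x‖ ^ (2 - 2 * lam)) := by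
  have hx' : 0 < ‖x‖ := norm_pos_iff.2 hx
  have hpow : ‖x‖ ^ (2 - 2 * lam) = ‖x‖ ^ 2 * ‖x‖ ^ (-(2 * lam)) := by
    rw [sub_eq_add_neg, Real.rpow_add hx', Real.rpow_two]
  have hr : 0 ≤ ‖x‖ ^ (-(2 * lam)) := by positivity
  have hL : (L x) ^ 2 ≤ ‖L‖ ^ 2 * ‖x‖ ^ 2 := by
    rw [← mul_pow, ← sq_abs (L x)]
    exact pow_le_pow_left₀ (abs_nonneg _) (L.le_opNorm x) 2
  have key : 2 * t * L x ≤ a * t ^ 2 + a⁻¹ * (‖L‖ ^ 2 * ‖x‖ ^ 2) := by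
    have h1 : 0 ≤ a⁻¹ * (a * t - L x) ^ 2 := by positivity
    have h2 : a⁻¹ * (a * t - L x) ^ 2 = a * t ^ 2 - 2 * t * L x + a⁻¹ * (L x) ^ 2 := by
      field_simp
      ring
    have h3 := mul_le_mul_of_nonneg_left hL (inv_pos.2 ha).le
    linarith
  calc _ ≤ _ := mul_le_mul_of_nonneg_right key hr
    _ = _ := by rw [hpow]; ring

/-- The radial derivative of `u² |x|^{-2λ}`. -/
lemma fderiv_sq_mul_norm_rpow_apply_self {n : ℕ} (lam : ℝ) {u : EuclideanSpace ℝ (Fin n) → ℝ}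
    {x : EuclideanSpace ℝ (Fin n)} (hx : x ≠ 0) (hu : DifferentiableAt ℝ u x) :
    fderiv ℝ (fun y => u y ^ 2 * ‖y‖ ^ (-(2 * lam))) x x =
      2 * u x * fderiv ℝ u x x * ‖x‖ ^ (-(2 * lam)) -
        2 * lam * (u x ^ 2 * ‖x‖ ^ (-(2 * lam))) := by
  have hx' : 0 < ‖x‖ := norm_pos_iff.2 hx
  have hN : DifferentiableAt ℝ (fun y : EuclideanSpace ℝ (Fin n) => ‖y‖) x :=
    (contDiffAt_norm ℝ hx).differentiableAt one_ne_zero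
  -- Euler's identity for the 1-homogeneous function `|x|`.
  have hE : fderiv ℝ (fun y : EuclideanSpace ℝ (Fin n) => ‖y‖) x x = ‖x‖ := hN.fderiv_norm_self
  have hR := hN.hasFDerivAt.rpow_const (p := -(2 * lam)) (Or.inl hx'.ne')
  have hW := (hu.hasFDerivAt.pow 2).mul hR
  have hp : ‖x‖ ^ (-(2 * lam) - 1) * ‖x‖ = ‖x‖ ^ (-(2 * lam)) := by
    rw [Real.rpow_sub_one hx'.ne', div_mul_cancel₀ _ hx'.ne']
  have := congrArg (fun M => M x) hW.fderiv
  refine this.trans ?_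
  simp [hE]
  rw [← hp]
  ring

/-- Hardy-type inequality (Lemma 2.1): for `u ∈ C_c^∞(ℝⁿ)` supported away from the
origin and `λ > n/2`,
`∫ |u|²/|x|^{2λ} ≤ 4/(2λ-n)² ∫ |∇u|²/|x|^{2λ-2}`. -/
theorem hardy_type_inequality (n : ℕ) (hn : 1 ≤ n) (lam : ℝ) (hlam : (n : ℝ) / 2 < lam)
    (u : EuclideanSpace ℝ (Fin n) → ℝ)
    (hu : ContDiff ℝ (⊤ : ℕ∞) u) (hsupp : HasCompactSupport u)
    (h0 : (0 : EuclideanSpace ℝ (Fin n)) ∉ tsupport u) :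
    ∫ x : EuclideanSpace ℝ (Fin n), |u x| ^ 2 / ‖x‖ ^ (2 * lam) ≤
      4 / (2 * lam - n) ^ 2 *
        ∫ x : EuclideanSpace ℝ (Fin n), ‖fderiv ℝ u x‖ ^ 2 / ‖x‖ ^ (2 * lam - 2) := by
  have hu1 : ContDiff ℝ 1 u := hu.of_le (by exact_mod_cast le_top)
  set w : EuclideanSpace ℝ (Fin n) → ℝ := fun x => u x ^ 2 * ‖x‖ ^ (-(2 * lam)) with hw
  set G : EuclideanSpace ℝ (Fin n) → ℝ :=
    fun x => ‖fderiv ℝ u x‖ ^ 2 * ‖x‖ ^ (2 - 2 * lam) with hG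
  have hlhs : (fun x => |u x| ^ 2 / ‖x‖ ^ (2 * lam)) = w := by
    ext x
    simp only [hw]
    rw [sq_abs, Real.rpow_neg (norm_nonneg x), div_eq_mul_inv]
  have hrhs : (fun x => ‖fderiv ℝ u x‖ ^ 2 / ‖x‖ ^ (2 * lam - 2)) = G := by
    ext x
    simp only [hG]
    rw [← neg_sub (2 * lam) 2, Real.rpow_neg (norm_nonneg x), div_eq_mul_inv]
  rw [hlhs, hrhs]
  have hs2 : tsupport (fun x => u x ^ 2) ⊆ tsupport u :=
    closure_mono fun x hx hux => hx (by simp [hux])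
  have hsG : tsupport (fun x => ‖fderiv ℝ u x‖ ^ 2) ⊆ tsupport u :=
    (closure_mono (s := Function.support fun x => ‖fderiv ℝ u x‖ ^ 2)
      (t := Function.support (fderiv ℝ u))
      fun x hx hux => hx (by simp [hux])).trans (tsupport_fderiv_subset ℝ)
  have hwC : ContDiff ℝ 1 w :=
    contDiff_mul_norm_rpow (k := 1) (hu1.pow 2) (fun h => h0 (hs2 h)) _
  have hwS : HasCompactSupport w :=
    HasCompactSupport.mul_right (hsupp.of_isClosed_subset (isClosed_tsupport _) hs2)
  have hwI : Integrable w := hwC.continuous.integrable_of_hasCompactSupport hwS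
  have hdc : Continuous (fderiv ℝ u) := hu1.continuous_fderiv one_ne_zero
  have hGI : Integrable G := by
    refine Continuous.integrable_of_hasCompactSupport ?_
      (HasCompactSupport.mul_right (hsupp.of_isClosed_subset (isClosed_tsupport _) hsG))
    refine contDiff_zero.1 (contDiff_mul_norm_rpow (k := 0) ?_ (fun h => h0 (hsG h)) _)
    exact contDiff_zero.2 (by fun_prop)
  have hdI : Integrable (fun x => fderiv ℝ w x x) := by
    have hc : Continuous (fderiv ℝ w) := hwC.continuous_fderiv one_ne_zero
    refine Continuous.integrable_of_hasCompactSupport (by fun_prop) ?_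
    exact (hwS.fderiv ℝ).mono fun x hx hux => hx (by simp [hux])
  set a : ℝ := (2 * lam - n) / 2 with ha_def
  have ha : 0 < a := by rw [ha_def]; linarith
  have hpt : ∀ x, fderiv ℝ w x x ≤ (a - 2 * lam) * w x + a⁻¹ * G x := fun x => by
    by_cases hx : x = 0
    · subst hx
      have hw0 : w 0 = 0 := by simp [hw, image_eq_zero_of_notMem_tsupport h0]
      have : 0 ≤ a⁻¹ * G 0 := by positivity
      simpa [hw0] using this
    · have h1 := fderiv_sq_mul_norm_rpow_apply_self lam hx (hu1.differentiable one_ne_zero x)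
      have h2 := two_mul_fderiv_apply_self_le lam a ha hx (fderiv ℝ u x) (u x)
      simp only [hw, hG] at *
      linarith
  have hmono := integral_mono hdI ((hwI.const_mul _).add (hGI.const_mul _)) hpt
  rw [integral_fderiv_apply_self n w hwC hwS] at hmono
  simp only [Pi.add_apply] at hmono
  rw [integral_add (hwI.const_mul _) (hGI.const_mul _), integral_const_mul,
    integral_const_mul] at hmono
  have hn2 : (n : ℝ) = 2 * lam - 2 * a := by rw [ha_def]; ring
  rw [hn2] at hmono ⊢
  have hfin : a * ∫ x, w x ≤ a⁻¹ * ∫ x, G x := by linarith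
  have h4 : 4 / (2 * lam - (2 * lam - 2 * a)) ^ 2 = a⁻¹ * a⁻¹ := by
    rw [sub_sub_cancel]
    field_simp
    norm_num
  rw [h4, mul_assoc]
  calc ∫ x, w x = a⁻¹ * (a * ∫ x, w x) := by field_simp
    _ ≤ _ := mul_le_mul_of_nonneg_left hfin (inv_pos.2 ha).le
end

section
/- Let n ≥ 1. There exist a constant C₀ > 0 and a threshold λ₀ > n/2 such that for every real λ ≥ λ₀ and every C^∞ function u : ℝⁿ → ℝ with compact support whose support is disjoint from some neighborhood of the origin, the function x ↦ u(x)/|x|^{λ−1} (set to 0 at x = 0) satisfies ∫_{ℝⁿ} |∇(u(x)/|x|^{λ−1})|² dv ≤ C₀ ∫_{ℝⁿ} |∇u(x)|²/|x|^{2λ−2} dv. -/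
open MeasureTheory Classical

/-!
Write `v = u |x|^{-λ}` and `p = |x|^{1-λ} |∇u|`. The product rule gives
`|∇(u |x|^{1-λ})| ≤ p + |λ - 1| |v|`, so everything reduces to the weighted Hardy inequality
`∫ v² ≤ (2 / (2λ - n))² ∫ p²` (`weighted_hardy`).

For Hardy, integrating `div (v² x)` gives `∫ x · ∇(v²) = -n ∫ v²` (`integral_fderiv_self`). Since
`x · ∇v = |x|^{-λ} x · ∇u - λ v`, this reads `(2λ - n) ∫ v² = 2 ∫ v |x|^{-λ} (x · ∇u)`, and the
right-hand side is absorbed by `2 v p ≤ (k/2) v² + (2/k) p²` with `k = 2λ - n`.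

For `λ ≥ n` (and `n ≥ 1`) one has `0 ≤ λ - 1 ≤ 2λ - n`, so `C₀ = 2 + 2 · 4 = 10` works.
-/

/-- Euler's identity `∫ x · ∇F = -n ∫ F`, the integrated form of `div (F x) = x · ∇F + n F`. -/
lemma integral_fderiv_self {n : ℕ} (F : EuclideanSpace ℝ (Fin n) → ℝ)
    (hF : ContDiff ℝ 1 F) (hc : HasCompactSupport F) :
    ∫ x, fderiv ℝ F x x = -(n : ℝ) * ∫ x, F x := by
  have hcf : Continuous (fderiv ℝ F) := hF.continuous_fderiv one_ne_zero
  have hcF := hF.continuous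
  let e : Fin n → EuclideanSpace ℝ (Fin n) := fun i => EuclideanSpace.single i 1
  have hsum : ∀ x : EuclideanSpace ℝ (Fin n),
      fderiv ℝ F x x = ∑ i, x i * fderiv ℝ F x (e i) := by
    intro x
    have hx : x = ∑ i, x i • e i := by
      ext j
      simp [e, Pi.single_apply]
    conv_lhs => enter [2]; rw [hx]
    rw [map_sum]
    simp
  have hcoord : ∀ i, Continuous fun x : EuclideanSpace ℝ (Fin n) => x i := fun i =>
    (EuclideanSpace.proj (𝕜 := ℝ) i).continuous
  have hsf : ∀ i, HasCompactSupport fun x => fderiv ℝ F x (e i) := fun i =>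
    (hc.fderiv (𝕜 := ℝ)).comp_left
      (g := fun L : EuclideanSpace ℝ (Fin n) →L[ℝ] ℝ => L (e i)) (by simp)
  have hint : ∀ i, Integrable (fun x : EuclideanSpace ℝ (Fin n) => x i * fderiv ℝ F x (e i)) := by
    intro i
    refine Continuous.integrable_of_hasCompactSupport
      ((hcoord i).mul (hcf.clm_apply continuous_const)) ?_
    exact (hsf i).mul_left
  have hder : ∀ (i : Fin n) (x : EuclideanSpace ℝ (Fin n)),
      fderiv ℝ (fun x : EuclideanSpace ℝ (Fin n) => x i) x (e i) = 1 := by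
    intro i x
    have : HasFDerivAt (fun x : EuclideanSpace ℝ (Fin n) => x i)
        (EuclideanSpace.proj (𝕜 := ℝ) i) x := (EuclideanSpace.proj (𝕜 := ℝ) i).hasFDerivAt
    rw [this.fderiv]
    simp [e]
  have hFi : Integrable F := hcF.integrable_of_hasCompactSupport hc
  have hparts : ∀ i, ∫ x, x i * fderiv ℝ F x (e i) = - ∫ x, F x := by
    intro i
    rw [integral_mul_fderiv_eq_neg_fderiv_mul_of_integrable
      (f := fun x : EuclideanSpace ℝ (Fin n) => x i) (g := F) (v := e i)]
    · simp [hder]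
    · simpa [hder] using hFi
    · exact hint i
    · exact ((hcoord i).mul hcF).integrable_of_hasCompactSupport hc.mul_left
    · exact fun x _ => (EuclideanSpace.proj (𝕜 := ℝ) i).differentiableAt
    · exact fun x _ => (hF.differentiable one_ne_zero) x
  simp_rw [hsum]
  rw [integral_finsetSum _ fun i _ => hint i]
  simp [hparts]

lemma hasFDerivAt_norm_rpow_ne_zero {E : Type*} [NormedAddCommGroup E] [InnerProductSpace ℝ E]
    {x : E} (hx : x ≠ 0) (s : ℝ) :
    HasFDerivAt (fun y : E => ‖y‖ ^ s) ((s * ‖x‖ ^ (s - 1)) • fderiv ℝ (fun y : E => ‖y‖) x) x := by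
  have h : DifferentiableAt ℝ (fun y : E => ‖y‖) x := differentiableAt_id.norm ℝ hx
  exact h.hasFDerivAt.rpow_const (Or.inl (norm_ne_zero_iff.2 hx))

lemma hasFDerivAt_mul_norm_rpow {E : Type*} [NormedAddCommGroup E] [InnerProductSpace ℝ E]
    {u : E → ℝ} {x : E} (hu : DifferentiableAt ℝ u x) (hx : x ≠ 0) (s : ℝ) :
    HasFDerivAt (fun y : E => u y * ‖y‖ ^ s)
      (u x • ((s * ‖x‖ ^ (s - 1)) • fderiv ℝ (fun y : E => ‖y‖) x) + ‖x‖ ^ s • fderiv ℝ u x) x :=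
  hu.hasFDerivAt.mul (hasFDerivAt_norm_rpow_ne_zero hx s)

lemma contDiff_mul_norm_rpow_s1 {E : Type*} [NormedAddCommGroup E] [InnerProductSpace ℝ E]
    {u : E → ℝ} (hu : ContDiff ℝ 1 u) (h0 : (0 : E) ∉ tsupport u) (s : ℝ) :
    ContDiff ℝ 1 fun y : E => u y * ‖y‖ ^ s := by
  refine contDiff_iff_contDiffAt.2 fun x => ?_
  -- At the origin, `u` and hence the product vanish identically nearby.
  by_cases hx0 : x = 0
  · have hz : (fun y : E => u y * ‖y‖ ^ s) =ᶠ[nhds x] fun _ => (0 : ℝ) := by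
      filter_upwards [notMem_tsupport_iff_eventuallyEq.1 (hx0 ▸ h0)] with y hy
      simp [hy]
    exact contDiffAt_const.congr_of_eventuallyEq hz
  exact hu.contDiffAt.mul
    ((contDiffAt_id.norm ℝ hx0).rpow_const_of_ne (norm_ne_zero_iff.2 hx0))

lemma integrable_weighted_gradient {n : ℕ} {u : EuclideanSpace ℝ (Fin n) → ℝ}
    (hu : ContDiff ℝ 1 u) (hc : HasCompactSupport u)
    (h0 : (0 : EuclideanSpace ℝ (Fin n)) ∉ tsupport u) (s : ℝ) :
    Integrable fun x : EuclideanSpace ℝ (Fin n) => ‖fderiv ℝ u x‖ ^ 2 / ‖x‖ ^ s := by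
  have hsub : tsupport (fun x : EuclideanSpace ℝ (Fin n) => ‖fderiv ℝ u x‖ ^ 2 / ‖x‖ ^ s) ⊆
      tsupport u := by
    refine closure_minimal (fun x hx => ?_) (isClosed_tsupport u)
    refine support_fderiv_subset ℝ ?_
    intro h
    simp [h] at hx
  refine Continuous.integrable_of_hasCompactSupport ?_ (hc.of_isClosed_subset
    (isClosed_tsupport _) hsub)
  refine continuous_of_tsupport fun x hx => ?_
  have hx0 : x ≠ 0 := by
    rintro rfl
    exact h0 (hsub hx)
  have hn := norm_pos_iff.2 hx0
  refine ContinuousAt.div (((hu.continuous_fderiv one_ne_zero).norm.pow 2).continuousAt)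
    (continuous_norm.continuousAt.rpow_const (Or.inl hn.ne')) (Real.rpow_pos_of_pos hn s).ne'

lemma weight_eq {a r : ℝ} (hr : 0 < r) (lam : ℝ) :
    a ^ 2 / r ^ (2 * lam - 2) = (r ^ (1 - lam) * a) ^ 2 := by
  rw [mul_pow, ← Real.rpow_mul_natCast hr.le, div_eq_mul_inv, ← Real.rpow_neg hr.le, mul_comm]
  congr 2
  push_cast
  ring

/-- The Hardy inequality `∫ u² |x|^{-2λ} ≤ (2 / (2λ - n))² ∫ |∇u|² |x|^{2-2λ}`, together with
integrability of the left-hand integrand. -/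
lemma weighted_hardy {n : ℕ} {u : EuclideanSpace ℝ (Fin n) → ℝ}
    (hu : ContDiff ℝ 1 u) (hc : HasCompactSupport u)
    (h0 : (0 : EuclideanSpace ℝ (Fin n)) ∉ tsupport u) {lam : ℝ} (hl : 0 < 2 * lam - n) :
    Integrable (fun x : EuclideanSpace ℝ (Fin n) => (u x * ‖x‖ ^ (-lam)) ^ 2) ∧
    (2 * lam - n) ^ 2 * ∫ x : EuclideanSpace ℝ (Fin n), (u x * ‖x‖ ^ (-lam)) ^ 2 ≤
      4 * ∫ x : EuclideanSpace ℝ (Fin n), ‖fderiv ℝ u x‖ ^ 2 / ‖x‖ ^ (2 * lam - 2) := by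
  set k := 2 * lam - n with hk
  have hv := contDiff_mul_norm_rpow_s1 hu h0 (-lam)
  have hvc : HasCompactSupport fun y : EuclideanSpace ℝ (Fin n) => u y * ‖y‖ ^ (-lam) :=
    hc.mul_right
  set v := fun y : EuclideanSpace ℝ (Fin n) => u y * ‖y‖ ^ (-lam) with hvdef
  have hF : ContDiff ℝ 1 fun y => v y ^ 2 := hv.pow 2
  have hFc : HasCompactSupport fun y => v y ^ 2 := hvc.comp_left (g := fun t => t ^ 2) (by simp)
  have hFi : Integrable fun y => v y ^ 2 := hF.continuous.integrable_of_hasCompactSupport hFc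
  refine ⟨hFi, ?_⟩
  have hDi : Integrable fun x => fderiv ℝ (fun y => v y ^ 2) x x := by
    refine Continuous.integrable_of_hasCompactSupport
      ((hF.continuous_fderiv one_ne_zero).clm_apply continuous_id) ?_
    refine (hFc.fderiv (𝕜 := ℝ)).mono fun x hx h => ?_
    simp [h] at hx
  have hPi := integrable_weighted_gradient hu hc h0 (2 * lam - 2)
  have key : ∀ x, fderiv ℝ (fun y => v y ^ 2) x x + 2 * lam * v x ^ 2 ≤
      k / 2 * v x ^ 2 + 2 / k * (‖fderiv ℝ u x‖ ^ 2 / ‖x‖ ^ (2 * lam - 2)) := by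
    intro x
    by_cases hx : x = 0
    · subst hx
      have hv0 : v 0 = 0 := by simp [hvdef, image_eq_zero_of_notMem_tsupport h0]
      simp only [hv0, map_zero]
      have : 0 ≤ 2 / k * (‖fderiv ℝ u 0‖ ^ 2 /
        ‖(0 : EuclideanSpace ℝ (Fin n))‖ ^ (2 * lam - 2)) := by positivity
      simpa using this
    have hr := norm_pos_iff.2 hx
    rw [weight_eq hr]
    have hd := (hasFDerivAt_mul_norm_rpow (hu.differentiable one_ne_zero x) hx (-lam))
    have hd2 := hd.pow 2
    rw [hd2.fderiv]
    have hself : fderiv ℝ (fun y : EuclideanSpace ℝ (Fin n) => ‖y‖) x x = ‖x‖ :=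
      (differentiableAt_id.norm ℝ hx).fderiv_norm_self
    have hpow : ‖x‖ ^ (-lam - 1) * ‖x‖ = ‖x‖ ^ (-lam) := by
      rw [← Real.rpow_add_one hr.ne']; congr 1; ring
    have hpow' : ‖x‖ ^ (-lam) * ‖x‖ = ‖x‖ ^ (1 - lam) := by
      rw [← Real.rpow_add_one hr.ne']; congr 1; ring
    set q := ‖x‖ ^ (-lam) * fderiv ℝ u x x with hq
    set p := ‖x‖ ^ (1 - lam) * ‖fderiv ℝ u x‖ with hp
    have hqp : |q| ≤ p := by
      rw [hq, hp, ← hpow', abs_mul, abs_of_pos (Real.rpow_pos_of_pos hr _), mul_assoc]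
      gcongr
      rw [mul_comm]
      exact (fderiv ℝ u x).le_opNorm x
    have hval : ((2 • v x ^ (2 - 1)) • (u x • ((-lam * ‖x‖ ^ (-lam - 1)) •
        fderiv ℝ (fun y : EuclideanSpace ℝ (Fin n) => ‖y‖) x) +
          ‖x‖ ^ (-lam) • fderiv ℝ u x)) x = 2 * v x * q - 2 * lam * v x ^ 2 := by
      simp only [smul_apply, add_apply, hself,
        smul_eq_mul, nsmul_eq_mul]
      have : u x * (-lam * ‖x‖ ^ (-lam - 1) * ‖x‖) = -lam * v x := by
        rw [mul_assoc, hpow, hvdef]; ring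
      rw [this, hq]
      push_cast
      ring
    have hsq : q ^ 2 ≤ p ^ 2 := sq_le_sq' (by linarith [neg_abs_le q]) (by linarith [le_abs_self q])
    have hyoung : 2 * v x * q ≤ k / 2 * v x ^ 2 + 2 / k * q ^ 2 := by
      have : 0 ≤ 1 / (2 * k) * (k * v x - 2 * q) ^ 2 := by positivity
      have e : 1 / (2 * k) * (k * v x - 2 * q) ^ 2 =
          k / 2 * v x ^ 2 + 2 / k * q ^ 2 - 2 * v x * q := by
        field_simp
        ring
      linarith
    have h2k : 2 / k * q ^ 2 ≤ 2 / k * p ^ 2 := by gcongr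
    calc _ = (2 * v x * q - 2 * lam * v x ^ 2) + 2 * lam * v x ^ 2 := by rw [← hval]
      _ ≤ _ := by linarith
  have hI := integral_mono (hDi.add (hFi.const_mul (2 * lam)))
    ((hFi.const_mul (k / 2)).add (hPi.const_mul (2 / k))) key
  simp only [Pi.add_apply] at hI
  rw [integral_add hDi (hFi.const_mul _), integral_add (hFi.const_mul _) (hPi.const_mul _),
    integral_const_mul, integral_const_mul, integral_const_mul,
    integral_fderiv_self _ hF hFc] at hI
  set I := ∫ x, v x ^ 2
  set J := ∫ x : EuclideanSpace ℝ (Fin n), ‖fderiv ℝ u x‖ ^ 2 / ‖x‖ ^ (2 * lam - 2)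
  have h1 : k / 2 * I ≤ 2 / k * J := by
    have : k * I = -(n : ℝ) * I + 2 * lam * I := by rw [hk]; ring
    linarith
  have h2 := mul_le_mul_of_nonneg_left h1 (by positivity : 0 ≤ 2 * k)
  have e1 : 2 * k * (k / 2 * I) = k ^ 2 * I := by ring
  have e2 : 2 * k * (2 / k * J) = 4 * J := by field_simp; ring
  linarith

/-- Lemma 2.2: there exist `C₀ > 0` and a threshold `λ₀ > n/2` such that for all
`λ ≥ λ₀` and all `u ∈ C_c^∞(ℝⁿ)` supported away from the origin,
`∫ |∇(u/|x|^{λ-1})|² ≤ C₀ ∫ |∇u|²/|x|^{2λ-2}`. -/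
theorem gradient_weighted_inequality (n : ℕ) (hn : 1 ≤ n) :
    ∃ C₀ : ℝ, 0 < C₀ ∧ ∃ lam₀ : ℝ, (n : ℝ) / 2 < lam₀ ∧
      ∀ lam : ℝ, lam₀ ≤ lam →
        ∀ u : EuclideanSpace ℝ (Fin n) → ℝ,
          ContDiff ℝ (⊤ : ℕ∞) u → HasCompactSupport u →
          (0 : EuclideanSpace ℝ (Fin n)) ∉ tsupport u →
          ∫ x : EuclideanSpace ℝ (Fin n),
              ‖fderiv ℝ (fun y : EuclideanSpace ℝ (Fin n) =>
                if y = (0 : EuclideanSpace ℝ (Fin n)) then 0 else u y / ‖y‖ ^ (lam - 1)) x‖ ^ 2 ≤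
            C₀ * ∫ x : EuclideanSpace ℝ (Fin n), ‖fderiv ℝ u x‖ ^ 2 / ‖x‖ ^ (2 * lam - 2) := by
  have hn' : (1 : ℝ) ≤ n := by exact_mod_cast hn
  refine ⟨10, by norm_num, n, by linarith, fun lam hlam u hu' hc h0 => ?_⟩
  have hu : ContDiff ℝ 1 u := hu'.of_le (by exact_mod_cast le_top)
  obtain ⟨hFi, hH⟩ := weighted_hardy hu hc h0 (lam := lam) (by linarith)
  have hPi := integrable_weighted_gradient hu hc h0 (2 * lam - 2)
  have hnz : ∀ᵐ x : EuclideanSpace ℝ (Fin n), x ≠ 0 := by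
    have : Nonempty (Fin n) := ⟨⟨0, hn⟩⟩
    have : Nontrivial (EuclideanSpace ℝ (Fin n)) := inferInstance
    exact Measure.ae_ne volume 0
  have key : ∀ x : EuclideanSpace ℝ (Fin n), x ≠ 0 →
      ‖fderiv ℝ (fun y : EuclideanSpace ℝ (Fin n) =>
        if y = (0 : EuclideanSpace ℝ (Fin n)) then 0 else u y / ‖y‖ ^ (lam - 1)) x‖ ^ 2 ≤
      2 * (‖fderiv ℝ u x‖ ^ 2 / ‖x‖ ^ (2 * lam - 2)) +
        2 * (lam - 1) ^ 2 * (u x * ‖x‖ ^ (-lam)) ^ 2 := by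
    intro x hx
    have hr := norm_pos_iff.2 hx
    have heq : (fun y : EuclideanSpace ℝ (Fin n) =>
        if y = (0 : EuclideanSpace ℝ (Fin n)) then 0 else u y / ‖y‖ ^ (lam - 1)) =ᶠ[nhds x]
        fun y => u y * ‖y‖ ^ (1 - lam) := by
      filter_upwards [isOpen_ne.mem_nhds hx] with y hy
      rw [if_neg hy, div_eq_mul_inv, ← Real.rpow_neg (norm_nonneg y), neg_sub]
    rw [heq.fderiv_eq,
      (hasFDerivAt_mul_norm_rpow (hu.differentiable one_ne_zero x) hx (1 - lam)).fderiv,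
      weight_eq hr, show 1 - lam - 1 = -lam by ring]
    have hL : ‖fderiv ℝ (fun y : EuclideanSpace ℝ (Fin n) => ‖y‖) x‖ ≤ 1 := by
      simpa using norm_fderiv_le_of_lipschitz ℝ
        (lipschitzWith_one_norm (E := EuclideanSpace ℝ (Fin n))) (x₀ := x)
    set v := u x * ‖x‖ ^ (-lam) with hv
    set p := ‖x‖ ^ (1 - lam) * ‖fderiv ℝ u x‖ with hp
    have hb : ‖u x • ((1 - lam) * ‖x‖ ^ (-lam)) •
        fderiv ℝ (fun y : EuclideanSpace ℝ (Fin n) => ‖y‖) x + ‖x‖ ^ (1 - lam) • fderiv ℝ u x‖ ≤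
        |(lam - 1) * v| + p := by
      refine (norm_add_le _ _).trans (add_le_add ?_ ?_)
      · rw [smul_smul, norm_smul, Real.norm_eq_abs,
          show u x * ((1 - lam) * ‖x‖ ^ (-lam)) = -((lam - 1) * v) by rw [hv]; ring, abs_neg]
        exact mul_le_of_le_one_right (abs_nonneg _) hL
      · rw [norm_smul, Real.norm_eq_abs, abs_of_pos (Real.rpow_pos_of_pos hr _)]
    calc _ ≤ (|(lam - 1) * v| + p) ^ 2 := by gcongr
      _ ≤ 2 * p ^ 2 + 2 * |(lam - 1) * v| ^ 2 := by
        nlinarith [sq_nonneg (|(lam - 1) * v| - p)]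
      _ = _ := by rw [sq_abs]; ring
  have hI := integral_mono_of_nonneg (Filter.Eventually.of_forall fun x => by positivity)
    ((hPi.const_mul 2).add (hFi.const_mul (2 * (lam - 1) ^ 2))) (hnz.mono key)
  simp only [Pi.add_apply] at hI
  rw [integral_add (hPi.const_mul _) (hFi.const_mul _), integral_const_mul,
    integral_const_mul] at hI
  have hI0 : 0 ≤ ∫ x : EuclideanSpace ℝ (Fin n), (u x * ‖x‖ ^ (-lam)) ^ 2 :=
    integral_nonneg fun x => sq_nonneg _
  have hcoef : (lam - 1) ^ 2 ≤ (2 * lam - n) ^ 2 := by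
    apply pow_le_pow_left₀ <;> linarith
  have := mul_le_mul_of_nonneg_right hcoef hI0
  linarith
end

section
/- Let n ≥ 1, let Ω be a nonempty open connected subset of ℝⁿ, and let u : Ω → ℝ be locally Lipschitz on Ω. Let V : Ω → ℝ be a nonnegative measurable function such that x ↦ V(x)ⁿ is integrable on every compact subset of Ω. Assume that for almost every x ∈ Ω at which u is differentiable, ‖fderiv u x‖ ≤ V(x)·|u(x)|. If u(x₀) = 0 for some x₀ ∈ Ω, then u is identically 0 on Ω. -/
/-!
The zero set of `u` is relatively closed in the connected set `Ω`, so it is enough to show that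
it is open. Let `u x₀ = 0`, and use polar coordinates around `x₀`. By Rademacher's theorem and
Fubini, for almost every direction `θ` the function `w s = u (x₀ + s • θ)` is Lipschitz on a
fixed interval, satisfies `|w'| ≤ v |w|` almost everywhere with `v s = V (x₀ + s • θ)`, and
`M = ∫ s ^ (n - 1) * v s ^ n ds` is finite (`ae_sphere_ae`, `ae_sphere_integrableOn`).

Such a `w` vanishes (`eq_zero_of_abs_deriv_le`). Put `F = log (w² + ε²) / 2`, a Lipschitz
function with `F' ≤ v`. Young's inequality for `τ * v τ` gives
`v τ ≤ 1 / (2 τ) + 2 ^ (n - 1) * τ ^ (n - 1) * v τ ^ n`, whence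
`F r - F s ≤ log (r / s) / 2 + 2 ^ (n - 1) * M`. As `|w s| ≤ K s`, the choice `ε = s` yields
`F s ≤ log s + C`, and so `log |w r| ≤ log s / 2 + C'` for all small `s > 0`. Letting `s → 0`
rules out `w r ≠ 0`.

Hence `u` vanishes on almost every ray in a ball around `x₀`, and by continuity on the whole ball
(`eq_zero_near`).
-/

open MeasureTheory

/-- Young-type inequality that replaces Hölder's inequality. The coefficient `1 / 2` of the
constant term only has to be smaller than `1`. -/
theorem le_half_add_two_pow_mul_pow {n : ℕ} (hn : 1 ≤ n) {t : ℝ} (ht : 0 ≤ t) :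
    t ≤ 1 / 2 + 2 ^ (n - 1) * t ^ n := by
  obtain ⟨m, rfl⟩ := Nat.exists_eq_add_of_le' hn
  simp only [Nat.add_sub_cancel]
  have h0 : 0 ≤ 2 ^ m * t ^ (m + 1) := by positivity
  rcases le_total t (1 / 2) with h | h
  · linarith
  · have h1 : 1 ≤ (2 * t) ^ m := one_le_pow₀ (by linarith)
    have h2 : 2 ^ m * t ^ (m + 1) = (2 * t) ^ m * t := by rw [mul_pow]; ring
    nlinarith

theorem hasDerivAt_half_log {ε : ℝ} (hε : 0 < ε) (y : ℝ) :
    HasDerivAt (fun y : ℝ => 1 / 2 * Real.log (y ^ 2 + ε ^ 2)) (y / (y ^ 2 + ε ^ 2)) y := by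
  have hpos : 0 < y ^ 2 + ε ^ 2 := by positivity
  have h := (((hasDerivAt_pow 2 y).add_const (ε ^ 2)).log hpos.ne').const_mul (1 / 2)
  refine h.congr_deriv ?_
  push_cast
  field_simp

theorem lipschitzWith_half_log {ε : ℝ} (hε : 0 < ε) :
    LipschitzWith (Real.toNNReal (1 / ε)) (fun y : ℝ => 1 / 2 * Real.log (y ^ 2 + ε ^ 2)) := by
  refine lipschitzWith_of_nnnorm_deriv_le
    (fun y => (hasDerivAt_half_log hε y).differentiableAt) fun y => ?_
  rw [(hasDerivAt_half_log hε y).deriv, ← NNReal.coe_le_coe, coe_nnnorm,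
    Real.coe_toNNReal _ (by positivity), Real.norm_eq_abs, abs_div,
    abs_of_pos (show 0 < y ^ 2 + ε ^ 2 by positivity), div_le_div_iff₀ (by positivity) hε]
  nlinarith [sq_abs y, sq_nonneg (|y| - ε), mul_nonneg (abs_nonneg y) hε.le]

/-- The one-dimensional statement on a ray: the weight `s ^ (n - 1)` lets `v` fail to be
integrable at `0`, but only so mildly that `log |w|` cannot decrease to `-∞` at the speed
`log s` that Lipschitz continuity at the zero `0` forces. -/
theorem eq_zero_of_abs_deriv_le {n : ℕ} (hn : 1 ≤ n) {r : ℝ} (hr : 0 < r) {K : NNReal}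
    {w v : ℝ → ℝ} (hw : LipschitzOnWith K w (Set.Icc 0 r)) (hw0 : w 0 = 0)
    (hv : ∀ᵐ s, s ∈ Set.Ioo 0 r →
      DifferentiableAt ℝ w s ∧ 0 ≤ v s ∧ |deriv w s| ≤ v s * |w s|)
    (hint : IntegrableOn (fun s => s ^ (n - 1) * v s ^ n) (Set.Ioc 0 r)) :
    w r = 0 := by
  by_contra hne
  set M : ℝ := ∫ s in Set.Ioc 0 r, s ^ (n - 1) * v s ^ n with hM
  have hae : ∀ᵐ s, s ∈ Set.Ioc 0 r →
      DifferentiableAt ℝ w s ∧ 0 ≤ v s ∧ |deriv w s| ≤ v s * |w s| := by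
    have hrr : ∀ᵐ s : ℝ, s ≠ r := by simp [ae_iff]
    filter_upwards [hv, hrr] with s hs hsr hs'
    exact hs ⟨hs'.1, lt_of_le_of_ne hs'.2 hsr⟩
  -- The estimate at a single small radius `s`, with the regularisation parameter `ε = s`.
  have key : ∀ s ∈ Set.Ioo 0 r, Real.log |w r| ≤
      1 / 2 * Real.log (K ^ 2 + 1) + 1 / 2 * Real.log r + 2 ^ (n - 1) * M
        + 1 / 2 * Real.log s := by
    rintro s ⟨hs0, hsr⟩
    have hsub : Set.Icc s r ⊆ Set.Icc 0 r := Set.Icc_subset_Icc_left hs0.le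
    set F : ℝ → ℝ := fun τ => 1 / 2 * Real.log (w τ ^ 2 + s ^ 2) with hF
    have hFac : AbsolutelyContinuousOnInterval F s r := by
      have h1 := (lipschitzWith_half_log hs0).comp_lipschitzOnWith (hw.mono hsub)
      rw [← Set.uIcc_of_le hsr.le] at h1
      exact h1.absolutelyContinuousOnInterval
    have hFTC := hFac.integral_deriv_eq_sub
    have hi1 : IntervalIntegrable (fun τ : ℝ => 1 / 2 * τ⁻¹) volume s r := by
      apply IntervalIntegrable.const_mul
      refine intervalIntegral.intervalIntegrable_inv (fun x hx => ?_) continuousOn_id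
      rw [Set.uIcc_of_le hsr.le] at hx
      exact (hs0.trans_le hx.1).ne'
    have hsub' : Set.Ioc s r ⊆ Set.Ioc 0 r := Set.Ioc_subset_Ioc_left hs0.le
    have hi2 : IntervalIntegrable (fun τ : ℝ => 2 ^ (n - 1) * (τ ^ (n - 1) * v τ ^ n))
        volume s r := by
      apply IntervalIntegrable.const_mul
      rw [intervalIntegrable_iff_integrableOn_Ioc_of_le hsr.le]
      exact hint.mono_set hsub'
    have hle : ∫ τ in s..r, deriv F τ ≤
        ∫ τ in s..r, (1 / 2 * τ⁻¹ + 2 ^ (n - 1) * (τ ^ (n - 1) * v τ ^ n)) := by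
      rw [intervalIntegral.integral_of_le hsr.le, intervalIntegral.integral_of_le hsr.le]
      refine setIntegral_mono_on_ae hFac.intervalIntegrable_deriv.1 (hi1.add hi2).1
        measurableSet_Ioc ?_
      filter_upwards [hae] with τ hτ hτs
      obtain ⟨hd, hv0, hdv⟩ := hτ (hsub' hτs)
      have hτ0 : 0 < τ := hs0.trans hτs.1
      have hpos : 0 < w τ ^ 2 + s ^ 2 := by positivity
      have hderiv : deriv F τ = w τ / (w τ ^ 2 + s ^ 2) * deriv w τ :=
        ((hasDerivAt_half_log hs0 (w τ)).comp τ hd.hasDerivAt).deriv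
      have hFv : deriv F τ ≤ v τ := by
        rw [hderiv, div_mul_eq_mul_div, div_le_iff₀ hpos]
        calc w τ * deriv w τ ≤ |w τ| * |deriv w τ| := by
              rw [← abs_mul]; exact le_abs_self _
          _ ≤ |w τ| * (v τ * |w τ|) := by gcongr
          _ = v τ * w τ ^ 2 := by rw [← sq_abs (w τ)]; ring
          _ ≤ v τ * (w τ ^ 2 + s ^ 2) := by gcongr; nlinarith
      -- Young's inequality for the scale-invariant quantity `τ * v τ`, divided by `τ`.
      have hY := le_half_add_two_pow_mul_pow hn (mul_nonneg hτ0.le hv0)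
      have hpow : (τ * v τ) ^ n = τ * (τ ^ (n - 1) * v τ ^ n) := by
        rw [mul_pow, ← mul_assoc, mul_pow_sub_one (by lia)]
      rw [hpow] at hY
      refine hFv.trans (le_of_mul_le_mul_left (hY.trans_eq ?_) hτ0)
      field_simp
    have hMle : ∫ τ in s..r, τ ^ (n - 1) * v τ ^ n ≤ M := by
      rw [intervalIntegral.integral_of_le hsr.le, hM]
      refine setIntegral_mono_set hint ?_ hsub'.eventuallyLE
      rw [Filter.EventuallyLE, ae_restrict_iff' measurableSet_Ioc]
      filter_upwards [hae] with τ hτ hτ'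
      have h1 := (hτ hτ').2.1
      have h2 := hτ'.1.le
      simp only [Pi.zero_apply]
      positivity
    rw [intervalIntegral.integral_add hi1 hi2, intervalIntegral.integral_const_mul,
      intervalIntegral.integral_const_mul, integral_inv_of_pos hs0 hr,
      Real.log_div hr.ne' hs0.ne', hFTC] at hle
    have hFr : Real.log |w r| ≤ F r := by
      have h1 : Real.log |w r| = 1 / 2 * Real.log (w r ^ 2) := by
        rw [Real.log_abs, Real.log_pow]; push_cast; ring
      have h2 : Real.log (w r ^ 2) ≤ Real.log (w r ^ 2 + s ^ 2) :=
        Real.log_le_log (by positivity) (by nlinarith)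
      simp only [hF]
      linarith
    have hFs : F s ≤ 1 / 2 * Real.log (K ^ 2 + 1) + Real.log s := by
      have h1 : |w s| ≤ K * s := by
        have := hw.dist_le_mul s ⟨hs0.le, hsr.le⟩ 0 ⟨le_rfl, hr.le⟩
        simpa [hw0, Real.dist_eq, abs_of_pos hs0] using this
      have h2 : w s ^ 2 ≤ (K * s) ^ 2 := by
        rw [← sq_abs]; gcongr
      have h3 : Real.log (w s ^ 2 + s ^ 2) ≤ Real.log ((K ^ 2 + 1) * s ^ 2) := by
        gcongr
        nlinarith
      rw [Real.log_mul (by positivity) (by positivity), Real.log_pow] at h3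
      push_cast at h3
      simp only [hF]
      linarith
    have h4 : (2 : ℝ) ^ (n - 1) * (∫ τ in s..r, τ ^ (n - 1) * v τ ^ n) ≤ 2 ^ (n - 1) * M := by
      gcongr
    linarith
  have hlim := Filter.tendsto_atBot_add_const_left (nhdsWithin (0 : ℝ) (Set.Ioi 0))
    (1 / 2 * Real.log (K ^ 2 + 1) + 1 / 2 * Real.log r + 2 ^ (n - 1) * M)
    (Real.tendsto_log_nhdsGT_zero.const_mul_atBot (show (0 : ℝ) < 1 / 2 by norm_num))
  obtain ⟨s, hs1, hs2⟩ :=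
    ((hlim.eventually_lt_atBot (Real.log |w r|)).and (Ioo_mem_nhdsGT hr)).exists
  exact absurd (key s hs2) (not_le.mpr hs1)

section Polar

variable {E : Type*} [NormedAddCommGroup E] [NormedSpace ℝ E] [FiniteDimensional ℝ E]
  [MeasurableSpace E] [BorelSpace E] (μ : Measure E) [μ.IsAddHaarMeasure]

/-- Fubini in polar coordinates: an integrable function is integrable against
`r ^ (dim E - 1) dr` along almost every ray. -/
theorem ae_sphere_integrableOn {g : E → ℝ} (hg : Integrable g μ) :
    ∀ᵐ θ : Metric.sphere (0 : E) 1 ∂μ.toSphere,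
      IntegrableOn (fun r : ℝ => r ^ (Module.finrank ℝ E - 1) * g (r • (θ : E))) (Set.Ioi 0) := by
  have h1 : Integrable (g ∘ Subtype.val : ({0}ᶜ : Set E) → ℝ) (μ.comap (↑)) :=
    (integrableOn_iff_comap_subtypeVal (measurableSet_singleton _).compl).1 hg.integrableOn
  have h2 := (μ.measurePreserving_homeomorphUnitSphereProd.symm
    (homeomorphUnitSphereProd E).toMeasurableEquiv).integrable_comp_emb
      (MeasurableEquiv.measurableEmbedding _) |>.2 h1
  filter_upwards [h2.prod_right_ae] with θ hθ
  rw [Measure.volumeIoiPow, integrable_withDensity_iff_integrable_smul' (by fun_prop)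
    (by simp)] at hθ
  rw [integrableOn_iff_comap_subtypeVal measurableSet_Ioi]
  refine hθ.congr (.of_forall ?_)
  intro r
  have hr : (0 : ℝ) < r := r.2
  have hsymm : ((homeomorphUnitSphereProd E).toMeasurableEquiv.symm (θ, r) : E) =
      (r : ℝ) • (θ : E) := homeomorphUnitSphereProd_symm_apply_coe E (θ, r)
  simp only [Function.comp_apply, hsymm, smul_eq_mul]
  rw [ENNReal.toReal_ofReal (by positivity)]

/-- Fubini in polar coordinates: a property valid almost everywhere is valid almost everywhere
on almost every ray. -/
theorem ae_sphere_ae {p : E → Prop} (hp : ∀ᵐ x ∂μ, p x) :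
    ∀ᵐ θ : Metric.sphere (0 : E) 1 ∂μ.toSphere, ∀ᵐ r : ℝ, 0 < r → p (r • (θ : E)) := by
  have h1 : ∀ᵐ x : ({0}ᶜ : Set E) ∂(μ.comap (↑)), p x :=
    (ae_restrict_iff_subtype (measurableSet_singleton _).compl).1 (ae_restrict_of_ae hp)
  have h2 := (μ.measurePreserving_homeomorphUnitSphereProd.symm
    (homeomorphUnitSphereProd E).toMeasurableEquiv).quasiMeasurePreserving.ae h1
  filter_upwards [Measure.ae_ae_of_ae_prod h2] with θ hθ
  rw [Measure.volumeIoiPow, ae_withDensity_iff (by fun_prop)] at hθ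
  refine (ae_restrict_iff' (s := Set.Ioi (0 : ℝ)) measurableSet_Ioi).1 ?_
  rw [ae_restrict_iff_subtype measurableSet_Ioi]
  filter_upwards [hθ] with r hr
  have hr0 : (0 : ℝ) < r := r.2
  have hsymm : ((homeomorphUnitSphereProd E).toMeasurableEquiv.symm (θ, r) : E) =
      (r : ℝ) • (θ : E) := homeomorphUnitSphereProd_symm_apply_coe E (θ, r)
  rw [hsymm] at hr
  exact hr (ENNReal.ofReal_pos.2 (by positivity)).ne'

end Polar

/-- The zero set of `u` is open: `u` vanishes along almost every ray out of a zero, hence near it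
by continuity. -/
theorem eq_zero_near {n : ℕ} (hn : 1 ≤ n)
    {Ω : Set (EuclideanSpace ℝ (Fin n))}
    {u : EuclideanSpace ℝ (Fin n) → ℝ}
    (hLip : ∀ x ∈ Ω, ∃ (K : NNReal) (t : Set (EuclideanSpace ℝ (Fin n))),
      t ∈ nhds x ∧ t ⊆ Ω ∧ LipschitzOnWith K u t)
    {V : EuclideanSpace ℝ (Fin n) → ℝ}
    (hVpos : ∀ x ∈ Ω, 0 ≤ V x)
    (hVint : ∀ K : Set (EuclideanSpace ℝ (Fin n)), K ⊆ Ω → IsCompact K →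
      IntegrableOn (fun x => V x ^ n) K volume)
    (hineq : ∀ᵐ x, x ∈ Ω → DifferentiableAt ℝ u x → ‖fderiv ℝ u x‖ ≤ V x * |u x|)
    {x₀ : EuclideanSpace ℝ (Fin n)} (hx₀ : x₀ ∈ Ω) (hux₀ : u x₀ = 0) :
    ∀ᶠ x in nhds x₀, u x = 0 := by
  obtain ⟨K, t, htx, htΩ, hLt⟩ := hLip x₀ hx₀
  obtain ⟨R, hR, hball⟩ := Metric.nhds_basis_closedBall.mem_iff.1 htx
  have hLB : LipschitzOnWith K u (Metric.closedBall x₀ R) := hLt.mono hball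
  have hBΩ : Metric.closedBall x₀ R ⊆ Ω := hball.trans htΩ
  have : Nontrivial (EuclideanSpace ℝ (Fin n)) := by
    have : Nonempty (Fin n) := ⟨⟨0, hn⟩⟩
    infer_instance
  -- Everything is translated so that `x₀` becomes the centre of polar coordinates.
  have hgood : ∀ᵐ y : EuclideanSpace ℝ (Fin n), y ∈ Metric.ball (0 : EuclideanSpace ℝ (Fin n)) R →
      DifferentiableAt ℝ u (x₀ + y) ∧ ‖fderiv ℝ u (x₀ + y)‖ ≤ V (x₀ + y) * |u (x₀ + y)| := by
    have h : ∀ᵐ x, x ∈ Metric.ball x₀ R →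
        DifferentiableAt ℝ u x ∧ ‖fderiv ℝ u x‖ ≤ V x * |u x| := by
      filter_upwards [hineq,
        (hLB.mono Metric.ball_subset_closedBall).ae_differentiableWithinAt_of_mem (μ := volume)]
        with x hx hd hxB
      have hd' := (hd hxB).differentiableAt (Metric.isOpen_ball.mem_nhds hxB)
      exact ⟨hd', hx (hBΩ (Metric.ball_subset_closedBall hxB)) hd'⟩
    filter_upwards [(measurePreserving_add_left volume x₀).quasiMeasurePreserving.ae h] with y hy hyB
    exact hy (by simpa using hyB)
  have hint : Integrable ((Metric.closedBall (0 : EuclideanSpace ℝ (Fin n)) R).indicator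
      fun y => V (x₀ + y) ^ n) := by
    have h := (hVint _ hBΩ (isCompact_closedBall x₀ R)).integrable_indicator
      Metric.isClosed_closedBall.measurableSet
    have h' := (measurePreserving_add_left volume x₀).integrable_comp_emb
      (MeasurableEquiv.addLeft x₀).measurableEmbedding |>.2 h
    refine h'.congr (.of_forall fun y => ?_)
    simp [Set.indicator]
  have hrays : ∀ᵐ θ : Metric.sphere (0 : EuclideanSpace ℝ (Fin n)) 1
      ∂(volume : Measure (EuclideanSpace ℝ (Fin n))).toSphere,
      ∀ r ∈ Set.Ioo 0 R, u (x₀ + r • (θ : EuclideanSpace ℝ (Fin n))) = 0 := by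
    filter_upwards [ae_sphere_ae volume hgood, ae_sphere_integrableOn volume hint]
      with θ hθ1 hθ2 r hr
    have hθn : ‖(θ : EuclideanSpace ℝ (Fin n))‖ = 1 := by simp
    have hmem : ∀ s ∈ Set.Icc 0 r, s • (θ : EuclideanSpace ℝ (Fin n)) ∈
        Metric.ball (0 : EuclideanSpace ℝ (Fin n)) R := fun s hs => by
      simpa [norm_smul, hθn, abs_of_nonneg hs.1] using hs.2.trans_lt hr.2
    have hmem' : ∀ s ∈ Set.Icc 0 r, x₀ + s • (θ : EuclideanSpace ℝ (Fin n)) ∈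
        Metric.closedBall x₀ R := fun s hs => by
      simpa using (mem_ball_zero_iff.1 (hmem s hs)).le
    refine eq_zero_of_abs_deriv_le (K := K) (w := fun s => u (x₀ + s • θ))
      (v := fun s => V (x₀ + s • θ)) hn hr.1 ?_ (by simpa using hux₀) ?_ ?_
    · refine LipschitzOnWith.of_dist_le_mul fun s hs s' hs' => ?_
      refine (hLB.dist_le_mul _ (hmem' s hs) _ (hmem' s' hs')).trans_eq ?_
      rw [dist_add_left, dist_eq_norm, ← sub_smul, norm_smul, hθn, mul_one, dist_eq_norm]
    · filter_upwards [hθ1] with s hs hsr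
      have hsr' := Set.Ioo_subset_Icc_self hsr
      obtain ⟨hd, hle⟩ := hs hsr.1 (hmem s hsr')
      have hline : HasDerivAt (fun s : ℝ => x₀ + s • (θ : EuclideanSpace ℝ (Fin n))) θ s := by
        simpa using ((hasDerivAt_id s).smul_const (θ : EuclideanSpace ℝ (Fin n))).const_add x₀
      have hcomp := hd.hasFDerivAt.comp_hasDerivAt s hline
      refine ⟨hcomp.differentiableAt, hVpos _ (hBΩ (hmem' s hsr')), ?_⟩
      have hder : deriv (fun s => u (x₀ + s • (θ : EuclideanSpace ℝ (Fin n)))) s =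
          fderiv ℝ u (x₀ + s • (θ : EuclideanSpace ℝ (Fin n))) θ := hcomp.deriv
      rw [hder, ← Real.norm_eq_abs]
      refine le_trans ?_ hle
      simpa [hθn] using (fderiv ℝ u (x₀ + s • (θ : EuclideanSpace ℝ (Fin n)))).le_opNorm θ
    · refine (hθ2.mono_set Set.Ioc_subset_Ioi_self).congr_fun ?_ measurableSet_Ioc
      intro s hs
      have h1 := Metric.ball_subset_closedBall (hmem s (Set.Ioc_subset_Icc_self hs))
      simp only [Set.indicator_of_mem h1, finrank_euclideanSpace, Fintype.card_fin]
  filter_upwards [Metric.ball_mem_nhds x₀ hR] with x hx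
  rcases eq_or_ne x x₀ with rfl | hxne
  · exact hux₀
  have hr0 : 0 < ‖x - x₀‖ := norm_pos_iff.2 (sub_ne_zero.2 hxne)
  have hrR : ‖x - x₀‖ < R := by simpa [dist_eq_norm] using hx
  have hcont : Continuous fun θ : Metric.sphere (0 : EuclideanSpace ℝ (Fin n)) 1 =>
      u (x₀ + ‖x - x₀‖ • (θ : EuclideanSpace ℝ (Fin n))) := by
    refine hLB.continuousOn.comp_continuous (by fun_prop) fun θ => ?_
    have hθn : ‖(θ : EuclideanSpace ℝ (Fin n))‖ = 1 := by simp
    simpa [norm_smul, hθn] using hrR.le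
  have hzero := Continuous.ext_on (Measure.dense_of_ae hrays) hcont
    (continuous_const (y := (0 : ℝ))) fun θ hθ => hθ _ ⟨hr0, hrR⟩
  have hx1 := congrFun hzero ⟨‖x - x₀‖⁻¹ • (x - x₀), by
    simp [norm_smul, hr0.ne']⟩
  simpa [smul_smul, hr0.ne'] using hx1

/-- Theorem 1.3: if `u` is locally Lipschitz on a domain `Ω ⊆ ℝⁿ`, `V ≥ 0` is
measurable with `Vⁿ` locally integrable on `Ω`, `|∇u| ≤ V|u|` a.e. on `Ω`, and
`u(x₀) = 0` at some point `x₀ ∈ Ω`, then `u ≡ 0` on `Ω`. -/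
theorem unique_continuation_lipschitz (n : ℕ) (hn : 1 ≤ n)
    (Ω : Set (EuclideanSpace ℝ (Fin n))) (hΩopen : IsOpen Ω) (hΩconn : IsConnected Ω)
    (u : EuclideanSpace ℝ (Fin n) → ℝ)
    (hLip : ∀ x ∈ Ω, ∃ (K : NNReal) (t : Set (EuclideanSpace ℝ (Fin n))),
      t ∈ nhds x ∧ t ⊆ Ω ∧ LipschitzOnWith K u t)
    (V : EuclideanSpace ℝ (Fin n) → ℝ)
    (hVpos : ∀ x ∈ Ω, 0 ≤ V x) (hVmeas : Measurable V)
    (hVint : ∀ K : Set (EuclideanSpace ℝ (Fin n)), K ⊆ Ω → IsCompact K →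
      IntegrableOn (fun x => V x ^ n) K volume)
    (hineq : ∀ᵐ x, x ∈ Ω → DifferentiableAt ℝ u x → ‖fderiv ℝ u x‖ ≤ V x * |u x|)
    (x₀ : EuclideanSpace ℝ (Fin n)) (hx₀ : x₀ ∈ Ω) (hux₀ : u x₀ = 0) :
    ∀ x ∈ Ω, u x = 0 := by
  have hcont : ∀ x ∈ Ω, ContinuousAt u x := fun x hx => by
    obtain ⟨K, t, ht, -, hK⟩ := hLip x hx
    exact hK.continuousOn.continuousAt ht
  have hopen : IsOpen (Ω ∩ {x | u x = 0}) := by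
    rw [isOpen_iff_mem_nhds]
    rintro x ⟨hx, hux⟩
    exact Filter.inter_mem (hΩopen.mem_nhds hx)
      (eq_zero_near hn hLip hVpos hVint hineq hx hux)
  have hsub : Ω ⊆ Ω ∩ {x | u x = 0} := by
    refine hΩconn.isPreconnected.subset_of_closure_inter_subset hopen
      ⟨x₀, hx₀, hx₀, hux₀⟩ ?_
    rintro x ⟨hxc, hx⟩
    refine ⟨hx, ?_⟩
    have : u x ∈ closure {(0 : ℝ)} :=
      closure_mono (by rintro _ ⟨y, hy, rfl⟩; exact hy.2)
        ((hcont x hx).continuousWithinAt.mem_closure_image hxc)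
    simpa using this
  exact fun x hx => (hsub hx).2
end

section
/- Let n ≥ 2, let Ω be a nonempty open connected subset of ℝⁿ, and let u : Ω → ℝ be locally Lipschitz on Ω. Let Z_u = {x ∈ Ω : u(x) = 0}. If Z_u is neither empty nor all of Ω, then the lower Lebesgue integral ∫_{Ω∖Z_u} (‖fderiv u x‖ / |u(x)|)ⁿ dv is infinite. -/
/-!
The divergence already happens on almost every ray issuing from a suitable zero of `u`.

By connectedness there is `z ∈ Ω` with `u z = 0` and points with `u ≠ 0` arbitrarily close to `z`
(`exists_boundary_zero`). On a small ball around `z`, `u` coincides with a globally Lipschitz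
function `g`. If the integral over this ball were finite, then by polar coordinates
(`lintegral_polar`) and Rademacher's theorem, for almost every direction `θ` the function
`h s = g (z + s • θ)` would satisfy `∫ s ^ (n - 1) * (|h'| / |h|) ^ n ds < ∞`; some such `θ` has
`h s₀ ≠ 0`, since the directions with this property form a nonempty open subset of the sphere.

This is impossible (`radial_lintegral_eq_top`). Let `c ≥ 0` be the last zero of `h` before `s₀`.
From `a ≤ 1 / (2 s) + 2 ^ (n - 1) * s ^ (n - 1) * a ^ n` with `a = |h'| / |h|`, integrating
`(log |h|)'` from `δ` to `s₀` bounds `(1 / 2) * log δ - log |h δ|` above, uniformly in `δ > c`. But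
`|h δ| ≤ K (δ - c)` and `δ - c ≤ δ`, so this quantity is at least
`-log K - (1 / 2) * log (δ - c)`, which is unbounded as `δ → c`.
-/

open MeasureTheory

/-- With `b = 2 * s * a`, this is `b - 1 ≤ b ^ n` divided by `2 * s`. -/
lemma sub_half_inv_le {n : ℕ} (hn : 1 ≤ n) {a s : ℝ} (ha : 0 ≤ a) (hs : 0 < s) :
    a - 1 / 2 * s⁻¹ ≤ 2 ^ (n - 1) * (s ^ (n - 1) * a ^ n) := by
  obtain ⟨m, rfl⟩ : ∃ m, n = m + 1 := ⟨n - 1, by omega⟩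
  have hb : 0 ≤ 2 * s * a := by positivity
  have key : 2 * s * a - 1 ≤ (2 * s * a) ^ (m + 1) := by
    rcases le_total (2 * s * a) 1 with h | h
    · have := pow_nonneg hb (m + 1)
      linarith
    · have := le_self_pow₀ h (Nat.succ_ne_zero m)
      simp only [Nat.succ_eq_add_one] at this
      linarith
  have e1 : a - 1 / 2 * s⁻¹ = (2 * s * a - 1) / (2 * s) := by field_simp
  have e2 : (2 : ℝ) ^ (m + 1 - 1) * (s ^ (m + 1 - 1) * a ^ (m + 1))
      = (2 * s * a) ^ (m + 1) / (2 * s) := by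
    simp only [Nat.add_sub_cancel]
    field_simp
    ring
  rw [e1, e2]
  gcongr

lemma absolutelyContinuousOnInterval_log_comp {K : NNReal} {h : ℝ → ℝ} (hh : LipschitzWith K h)
    {a b : ℝ} (hab : a ≤ b) (hne : ∀ s ∈ Set.Icc a b, h s ≠ 0) :
    AbsolutelyContinuousOnInterval (fun s => Real.log (h s)) a b := by
  obtain ⟨c, hc, hmin⟩ := isCompact_Icc.exists_isMinOn (Set.nonempty_Icc.2 hab)
    (hh.continuous.abs.continuousOn (s := Set.Icc a b))
  have hm : 0 < |h c| := abs_pos.2 (hne c hc)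
  have key : ∀ x ∈ Set.Icc a b, ∀ y ∈ Set.Icc a b,
      Real.log (h x) - Real.log (h y) ≤ K / |h c| * dist x y := by
    intro x hx y hy
    have hx0 := abs_pos.2 (hne x hx)
    have hy0 := abs_pos.2 (hne y hy)
    have hcy : |h c| ≤ |h y| := hmin hy
    rw [← Real.log_abs (h x), ← Real.log_abs (h y), ← Real.log_div hx0.ne' hy0.ne']
    calc Real.log (|h x| / |h y|) ≤ |h x| / |h y| - 1 :=
          Real.log_le_sub_one_of_pos (div_pos hx0 hy0)
      _ = (|h x| - |h y|) / |h y| := by field_simp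
      _ ≤ (K * dist x y) / |h y| := by
          gcongr
          exact (abs_sub_abs_le_abs_sub _ _).trans (hh.dist_le_mul x y)
      _ ≤ (K * dist x y) / |h c| := by gcongr
      _ = _ := by ring
  refine LipschitzOnWith.absolutelyContinuousOnInterval (K := K / Real.toNNReal |h c|) ?_
  rw [Set.uIcc_of_le hab]
  refine LipschitzOnWith.of_dist_le_mul fun x hx y hy => ?_
  rw [Real.dist_eq, NNReal.coe_div, Real.coe_toNNReal _ hm.le]
  refine abs_le.2 ⟨?_, key x hx y hy⟩
  have := key y hy x hx
  rw [dist_comm] at this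
  linarith

/-- The one-dimensional statement, with the weight `s ^ (n - 1)` of polar coordinates. The point is
that `log |h s| - (1 / 2) * log s` has derivative at most `2 ^ (n - 1)` times the integrand, yet
it tends to `-∞` at the last zero of `h` before `s₀`, because `h` is Lipschitz. -/
lemma radial_lintegral_eq_top {n : ℕ} (hn : 1 ≤ n) {K : NNReal} {h : ℝ → ℝ}
    (hh : LipschitzWith K h) (h0 : h 0 = 0) {s₀ : ℝ} (hs₀ : 0 < s₀) (hne : h s₀ ≠ 0) :
    ∫⁻ s in Set.Ioc 0 s₀, ENNReal.ofReal (s ^ (n - 1) * (|deriv h s| / |h s|) ^ n) = ⊤ := by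
  by_contra hfin
  set Q := ∫⁻ s in Set.Ioc 0 s₀, ENNReal.ofReal (s ^ (n - 1) * (|deriv h s| / |h s|) ^ n) with hQ
  -- `c` is the last zero of `h` before `s₀`.
  obtain ⟨c, ⟨⟨hc0, hcs⟩, hcz⟩, hcmax⟩ : ∃ c, IsGreatest (Set.Icc 0 s₀ ∩ h ⁻¹' {0}) c :=
    (isCompact_Icc.inter_right (isClosed_singleton.preimage hh.continuous)).exists_isGreatest
      ⟨0, ⟨le_rfl, hs₀.le⟩, h0⟩
  have hcz : h c = 0 := hcz
  have hcs : c < s₀ := lt_of_le_of_ne hcs (by rintro rfl; exact hne hcz)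
  have hnz : ∀ s, c < s → s ≤ s₀ → h s ≠ 0 := fun s hs hs' hz =>
    absurd (hcmax ⟨⟨hc0.trans hs.le, hs'⟩, hz⟩) (not_le.2 hs)
  have hKpos : (0 : ℝ) < K := by
    have h1 := hh.dist_le_mul s₀ 0
    rw [h0, Real.dist_eq, Real.dist_eq, sub_zero, sub_zero, abs_of_pos hs₀] at h1
    by_contra hK
    have : (K : ℝ) * s₀ ≤ 0 := mul_nonpos_of_nonpos_of_nonneg (not_lt.1 hK) hs₀.le
    exact hne (abs_nonpos_iff.1 (h1.trans this))
  have key : ∀ δ, c < δ → δ < s₀ →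
      (Real.log (h s₀) - 1 / 2 * Real.log s₀) - (Real.log (h δ) - 1 / 2 * Real.log δ)
        ≤ (ENNReal.ofReal (2 ^ (n - 1)) * Q).toReal := by
    intro δ hcδ hδs
    have hδ : 0 < δ := hc0.trans_lt hcδ
    have hac : AbsolutelyContinuousOnInterval
        (fun s => Real.log (h s) - 1 / 2 * Real.log s) δ s₀ :=
      (absolutelyContinuousOnInterval_log_comp hh hδs.le
        fun s hs => hnz s (hcδ.trans_le hs.1) hs.2).sub
      ((absolutelyContinuousOnInterval_log_comp LipschitzWith.id hδs.le
        fun s hs => (hδ.trans_le hs.1).ne').const_mul (1 / 2))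
    rw [← hac.integral_deriv_eq_sub, intervalIntegral.integral_of_le hδs.le]
    have hint := hac.intervalIntegrable_deriv
    rw [intervalIntegrable_iff_integrableOn_Ioc_of_le hδs.le] at hint
    rw [integral_eq_lintegral_pos_part_sub_lintegral_neg_part hint]
    refine (sub_le_self _ ENNReal.toReal_nonneg).trans ?_
    refine ENNReal.toReal_mono (ENNReal.mul_ne_top ENNReal.ofReal_ne_top hfin) ?_
    rw [hQ, ← lintegral_const_mul' _ _ ENNReal.ofReal_ne_top]
    refine le_trans ?_ (lintegral_mono_set (Set.Ioc_subset_Ioc_left hδ.le))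
    refine lintegral_mono_ae ?_
    filter_upwards [ae_restrict_mem measurableSet_Ioc,
      ae_restrict_of_ae hh.ae_differentiableAt_real] with s hs hd
    have hspos : 0 < s := hδ.trans hs.1
    have hsz : h s ≠ 0 := hnz s (hcδ.trans hs.1) hs.2
    rw [← ENNReal.ofReal_mul (by positivity)]
    refine ENNReal.ofReal_le_ofReal ?_
    have hder := ((hd.hasDerivAt.log hsz).sub
      ((Real.hasDerivAt_log hspos.ne').const_mul (1 / 2))).deriv
    have hder' : deriv (fun s => Real.log (h s) - 1 / 2 * Real.log s) s
      = deriv h s / h s - 1 / 2 * s⁻¹ := hder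
    rw [hder', ← abs_div]
    exact (sub_le_sub_right (le_abs_self _) _).trans (sub_half_inv_le hn (abs_nonneg _) hspos)
  set C := (ENNReal.ofReal (2 ^ (n - 1)) * Q).toReal
  have key2 : ∀ δ, c < δ → δ < s₀ →
      (Real.log (h s₀) - 1 / 2 * Real.log s₀) - Real.log K - C ≤ 1 / 2 * Real.log (δ - c) := by
    intro δ hcδ hδs
    have hδ : 0 < δ := hc0.trans_lt hcδ
    have hdc : 0 < δ - c := sub_pos.2 hcδ
    have h1 := key δ hcδ hδs
    have h2 : Real.log (h δ) ≤ Real.log K + Real.log (δ - c) := by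
      rw [← Real.log_mul hKpos.ne' hdc.ne', ← Real.log_abs]
      refine Real.log_le_log (abs_pos.2 (hnz δ hcδ hδs.le)) ?_
      have := hh.dist_le_mul δ c
      rwa [hcz, Real.dist_eq, Real.dist_eq, sub_zero, abs_of_pos hdc] at this
    have h3 : Real.log (δ - c) ≤ Real.log δ := Real.log_le_log hdc (by linarith)
    linarith
  have hlim : Filter.Tendsto (fun δ => 1 / 2 * Real.log (δ - c)) (nhdsWithin c (Set.Ioi c))
      Filter.atBot := by
    refine Filter.Tendsto.const_mul_atBot (by norm_num) (Real.tendsto_log_nhdsGT_zero.comp ?_)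
    refine tendsto_nhdsWithin_iff.2 ⟨?_, ?_⟩
    · have : Filter.Tendsto (fun δ : ℝ => δ - c) (nhds c) (nhds (c - c)) :=
        (continuous_id.sub continuous_const).tendsto c
      rw [sub_self] at this
      exact this.mono_left nhdsWithin_le_nhds
    · filter_upwards [self_mem_nhdsWithin] with δ hδ using sub_pos.2 (Set.mem_Ioi.1 hδ)
  obtain ⟨δ, hδ1, hδ2⟩ := ((hlim.eventually_lt_atBot _).and
    (Ioo_mem_nhdsGT hcs)).exists
  exact absurd (key2 δ hδ2.1 hδ2.2) (not_le.2 hδ1)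

section Polar

variable {E : Type*} [NormedAddCommGroup E] [NormedSpace ℝ E] [FiniteDimensional ℝ E]
  [Nontrivial E] [MeasurableSpace E] [BorelSpace E] (μ : Measure E) [μ.IsAddHaarMeasure]

/-- Integration in polar coordinates for nonnegative functions that need not be radial. -/
lemma lintegral_polar {n : ℕ} (hn : Module.finrank ℝ E = n) {f : E → ENNReal}
    (hf : Measurable f) :
    ∫⁻ x, f x ∂μ = ∫⁻ θ : Metric.sphere (0 : E) 1,
      (∫⁻ r in Set.Ioi (0 : ℝ), ENNReal.ofReal (r ^ (n - 1)) * f (r • (θ : E)))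
        ∂μ.toSphere := by
  have hmp := μ.measurePreserving_homeomorphUnitSphereProd
  rw [hn] at hmp
  have hcont : Continuous fun p : Metric.sphere (0 : E) 1 × Set.Ioi (0 : ℝ) =>
      (p.2 : ℝ) • (p.1 : E) := by fun_prop
  calc ∫⁻ x, f x ∂μ = ∫⁻ x : ({(0)}ᶜ : Set E), f x ∂(μ.comap (↑)) := by
        rw [lintegral_subtype_comap (measurableSet_singleton _).compl, restrict_compl_singleton]
    _ = ∫⁻ p, f ((p.2 : ℝ) • (p.1 : E))
          ∂(μ.toSphere.prod (Measure.volumeIoiPow (n - 1))) := by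
        refine Eq.trans (lintegral_congr fun x => ?_)
          (hmp.lintegral_comp (hf.comp hcont.measurable))
        congr 1
        have hx : ‖(x : E)‖ ≠ 0 := norm_ne_zero_iff.2 x.2
        simp [smul_smul, hx]
    _ = ∫⁻ θ, ∫⁻ r, f ((r : ℝ) • (θ : E)) ∂(Measure.volumeIoiPow (n - 1))
          ∂μ.toSphere :=
        lintegral_prod _ (hf.comp hcont.measurable).aemeasurable
    _ = _ := by
        refine lintegral_congr fun θ => ?_
        have hcont' : Continuous fun r : Set.Ioi (0 : ℝ) => (r : ℝ) • (θ : E) := by fun_prop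
        refine (lintegral_withDensity_eq_lintegral_mul _ (by fun_prop)
          (hf.comp hcont'.measurable)).trans ?_
        exact lintegral_subtype_comap measurableSet_Ioi
          (fun r : ℝ => ENNReal.ofReal (r ^ (n - 1)) * f (r • (θ : E)))

/-- The local form of the theorem, for a globally Lipschitz function vanishing at the origin. Where
`g x = 0` the integrand has the junk value `0`, so the zero set need not be removed. -/
lemma lintegral_ball_eq_top {n : ℕ} (hn : Module.finrank ℝ E = n) {K : NNReal}
    {g : E → ℝ} (hg : LipschitzWith K g) (h0 : g 0 = 0) {R : ℝ}
    {x₀ : E} (hx₀ : x₀ ∈ Metric.ball 0 R) (hne : g x₀ ≠ 0) :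
    ∫⁻ x in Metric.ball 0 R, ENNReal.ofReal ((‖fderiv ℝ g x‖ / |g x|) ^ n) ∂μ = ⊤ := by
  classical
  by_contra hfin
  have hx0 : x₀ ≠ 0 := by rintro rfl; exact hne h0
  have hs₀ : 0 < ‖x₀‖ := norm_pos_iff.2 hx0
  set D : Set E := {x | DifferentiableAt ℝ g x} with hD
  have hDm : MeasurableSet D := measurableSet_of_differentiableAt ℝ g
  have hDae : ∀ᵐ x ∂μ, x ∈ D := hg.ae_differentiableAt
  have hgm : Measurable g := hg.continuous.measurable
  have hfm : Measurable fun x => ENNReal.ofReal ((‖fderiv ℝ g x‖ / |g x|) ^ n) := by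
    have := (measurable_fderiv ℝ g).norm
    have := hgm.norm
    simp only [Real.norm_eq_abs] at this
    fun_prop
  -- The value `⊤` off `D` forces differentiability of `g` at almost all points of almost all rays.
  set F : E → ENNReal := D.piecewise
    ((Metric.ball 0 R).indicator fun x => ENNReal.ofReal ((‖fderiv ℝ g x‖ / |g x|) ^ n))
    (fun _ => ⊤) with hF
  have hFm : Measurable F :=
    (hfm.indicator Metric.isOpen_ball.measurableSet).piecewise hDm measurable_const
  have hFfin : ∫⁻ x, F x ∂μ ≠ ⊤ := by
    rw [← lintegral_indicator Metric.isOpen_ball.measurableSet] at hfin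
    rwa [lintegral_congr_ae (g := (Metric.ball 0 R).indicator
      fun x => ENNReal.ofReal ((‖fderiv ℝ g x‖ / |g x|) ^ n))]
    filter_upwards [hDae] with x hx
    exact Set.piecewise_eq_of_mem _ _ _ hx
  rw [lintegral_polar μ hn hFm] at hFfin
  have hcont : Continuous fun p : Metric.sphere (0 : E) 1 × ℝ => p.2 • (p.1 : E) := by fun_prop
  have hae := ae_lt_top (Measurable.lintegral_prod_right' (ν := volume.restrict (Set.Ioi (0 : ℝ)))
    (f := fun p : Metric.sphere (0 : E) 1 × ℝ =>
      ENNReal.ofReal (p.2 ^ (n - 1)) * F (p.2 • (p.1 : E)))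
    (Measurable.mul (by fun_prop) (hFm.comp hcont.measurable))) hFfin
  -- The directions whose ray meets `{g ≠ 0}` at distance `‖x₀‖` form a nonempty open set.
  have hUo : IsOpen {θ : Metric.sphere (0 : E) 1 | g (‖x₀‖ • (θ : E)) ≠ 0} := by
    have : Continuous fun θ : Metric.sphere (0 : E) 1 => g (‖x₀‖ • (θ : E)) :=
      hg.continuous.comp (continuous_subtype_val.const_smul _)
    exact isOpen_ne.preimage this
  have hUne : {θ : Metric.sphere (0 : E) 1 | g (‖x₀‖ • (θ : E)) ≠ 0}.Nonempty := by
    refine ⟨⟨‖x₀‖⁻¹ • x₀, by simp [norm_smul, hs₀.ne']⟩, ?_⟩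
    simpa [smul_smul, hs₀.ne'] using hne
  obtain ⟨θ, hθU, hθ⟩ : ∃ θ ∈ {θ : Metric.sphere (0 : E) 1 | g (‖x₀‖ • (θ : E)) ≠ 0},
      ∫⁻ r in Set.Ioi (0 : ℝ), ENNReal.ofReal (r ^ (n - 1)) * F (r • (θ : E)) < ⊤ := by
    by_contra! hcon
    refine (hUo.measure_pos μ.toSphere hUne).ne' (measure_mono_null ?_ hae)
    intro θ hθ
    exact not_lt.2 (hcon θ hθ)
  have hθ1 : ‖(θ : E)‖ = 1 := by simp
  have hh : LipschitzWith K fun s : ℝ => g (s • (θ : E)) := by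
    refine LipschitzWith.of_dist_le_mul fun s t => (hg.dist_le_mul _ _).trans_eq ?_
    rw [dist_eq_norm, ← sub_smul, norm_smul, hθ1, mul_one, dist_eq_norm]
  refine hθ.ne (top_le_iff.1 ?_)
  rw [← radial_lintegral_eq_top (hn ▸ Module.finrank_pos) hh (by simpa using h0) hs₀ hθU]
  refine le_trans ?_ (lintegral_mono_set (Set.Ioc_subset_Ioi_self : Set.Ioc 0 ‖x₀‖ ⊆ Set.Ioi 0))
  refine setLIntegral_mono' measurableSet_Ioc fun s hs => ?_
  rw [ENNReal.ofReal_mul (pow_nonneg hs.1.le _)]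
  gcongr
  by_cases hsD : s • (θ : E) ∈ D
  · have hball : s • (θ : E) ∈ Metric.ball (0 : E) R := by
      rw [mem_ball_zero_iff] at hx₀ ⊢
      rw [norm_smul, hθ1, mul_one, Real.norm_eq_abs, abs_of_pos hs.1]
      exact hs.2.trans_lt hx₀
    rw [hF, Set.piecewise_eq_of_mem _ _ _ hsD, Set.indicator_of_mem hball]
    have hd : HasDerivAt (fun s : ℝ => g (s • (θ : E))) (fderiv ℝ g (s • (θ : E)) θ) s := by
      have h1 : HasDerivAt (fun s : ℝ => s • (θ : E)) (θ : E) s := by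
        simpa using (hasDerivAt_id s).smul_const (θ : E)
      exact (DifferentiableAt.hasFDerivAt hsD).comp_hasDerivAt s h1
    rw [hd.deriv]
    have hle : |fderiv ℝ g (s • (θ : E)) θ| ≤ ‖fderiv ℝ g (s • (θ : E))‖ := by
      simpa [hθ1] using (fderiv ℝ g (s • (θ : E))).le_opNorm θ
    gcongr
  · rw [hF, Set.piecewise_eq_of_notMem _ _ _ hsD]
    exact le_top

end Polar

/-- By connectedness, the zero set has a boundary point inside `Ω`. -/
lemma exists_boundary_zero {X : Type*} [TopologicalSpace X] {Ω : Set X} (hΩ : IsOpen Ω)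
    (hconn : IsConnected Ω) {u : X → ℝ} (hu : ContinuousOn u Ω)
    (hZne : {x ∈ Ω | u x = 0} ≠ ∅) (hZprop : {x ∈ Ω | u x = 0} ≠ Ω) :
    ∃ z ∈ Ω, u z = 0 ∧ ∃ᶠ x in nhds z, u x ≠ 0 := by
  by_contra! hcon
  have hZo : IsOpen {x ∈ Ω | u x = 0} := by
    refine isOpen_iff_mem_nhds.2 fun z hz => ?_
    have := hcon z hz.1 hz.2
    exact Filter.inter_mem (hΩ.mem_nhds hz.1) this
  have hNo : IsOpen {x ∈ Ω | u x ≠ 0} := hu.isOpen_inter_preimage hΩ isOpen_ne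
  obtain ⟨z, hz⟩ := Set.nonempty_iff_ne_empty.2 hZne
  obtain ⟨y, hyΩ, hy⟩ : ∃ y ∈ Ω, u y ≠ 0 := by
    by_contra! h
    exact hZprop (Set.sep_eq_self_iff_mem_true.2 h)
  obtain ⟨x, -, hx1, hx2⟩ := hconn.isPreconnected _ _ hZo hNo
    (fun x hx => (em (u x = 0)).imp (fun h => ⟨hx, h⟩) fun h => ⟨hx, h⟩)
    ⟨z, hz.1, hz⟩ ⟨y, hyΩ, hyΩ, hy⟩
  exact hx2.2 hx1.2

/-- Theorem 3.6: if `u` is locally Lipschitz on a domain `Ω ⊆ ℝⁿ`, `n ≥ 2`, and the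
zero set `Z_u` of `u` is neither empty nor all of `Ω`, then
`∫_{Ω∖Z_u} (|∇u|/|u|)ⁿ dv = ∞`. -/
theorem divergence_of_gradient_quotient (n : ℕ) (hn : 2 ≤ n)
    (Ω : Set (EuclideanSpace ℝ (Fin n))) (hΩopen : IsOpen Ω) (hΩconn : IsConnected Ω)
    (u : EuclideanSpace ℝ (Fin n) → ℝ)
    (hLip : ∀ x ∈ Ω, ∃ (K : NNReal) (t : Set (EuclideanSpace ℝ (Fin n))),
      t ∈ nhds x ∧ t ⊆ Ω ∧ LipschitzOnWith K u t)
    (hZne : {x ∈ Ω | u x = 0} ≠ ∅) (hZprop : {x ∈ Ω | u x = 0} ≠ Ω) :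
    ∫⁻ x in Ω \ {x ∈ Ω | u x = 0},
      ENNReal.ofReal ((‖fderiv ℝ u x‖ / |u x|) ^ n) = ⊤ := by
  have hu : ContinuousOn u Ω := fun x hx => by
    obtain ⟨K, t, ht, -, hK⟩ := hLip x hx
    exact (hK.continuousOn.continuousAt ht).continuousWithinAt
  obtain ⟨z, hzΩ, hz0, hzf⟩ := exists_boundary_zero hΩopen hΩconn hu hZne hZprop
  obtain ⟨K, t, ht, htΩ, hK⟩ := hLip z hzΩ
  obtain ⟨R, hR, hRt⟩ := Metric.mem_nhds_iff.1 ht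
  obtain ⟨y, hyne, hyb⟩ := (hzf.and_eventually (Metric.ball_mem_nhds z hR)).exists
  obtain ⟨g, hg, hgu⟩ := (hK.mono hRt).extend_real
  have hgL : LipschitzWith K fun x => g (z + x) := by
    refine LipschitzWith.of_dist_le_mul fun x x' => (hg.dist_le_mul _ _).trans_eq ?_
    rw [dist_add_left]
  have hz' : g (z + 0) = 0 := by rw [add_zero, ← hgu (Metric.mem_ball_self hR), hz0]
  have : Nonempty (Fin n) := ⟨⟨0, by omega⟩⟩
  have htop := lintegral_ball_eq_top volume finrank_euclideanSpace_fin hgL hz' (R := R) (x₀ := y - z)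
    (by simpa [dist_eq_norm] using hyb) (by
      rw [add_sub_cancel, ← hgu hyb]; exact hyne)
  have hΩm : MeasurableSet (Ω \ {x ∈ Ω | u x = 0}) := by
    have : Ω \ {x ∈ Ω | u x = 0} = Ω ∩ u ⁻¹' {0}ᶜ := by
      ext x; simp +contextual
    rw [this]
    exact (hu.isOpen_inter_preimage hΩopen isOpen_ne).measurableSet
  rw [← top_le_iff, ← htop, ← lintegral_indicator hΩm,
    ← lintegral_add_left_eq_self ((Ω \ {x ∈ Ω | u x = 0}).indicator _) z,
    ← lintegral_indicator Metric.isOpen_ball.measurableSet]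
  -- After translation by `z`, the integrands agree on the ball, apart from zeros of `u`, where the
  -- local one is `0`.
  refine lintegral_mono fun x => ?_
  by_cases hx : x ∈ Metric.ball (0 : EuclideanSpace ℝ (Fin n)) R
  swap
  · simp [Set.indicator_of_notMem hx]
  have hxb : z + x ∈ Metric.ball z R := by simpa [dist_eq_norm] using hx
  rw [Set.indicator_of_mem hx, fderiv_comp_add_left, ← hgu hxb]
  by_cases hux : u (z + x) = 0
  · simp [hux, show ¬ n = 0 by omega]
  · have hmem : z + x ∈ Ω \ {x ∈ Ω | u x = 0} := ⟨htΩ (hRt hxb), fun h => hux h.2⟩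
    rw [Set.indicator_of_mem hmem]
    have : u =ᶠ[nhds (z + x)] g :=
      hgu.eventuallyEq_of_mem (Metric.isOpen_ball.mem_nhds hxb)
    rw [this.fderiv_eq]
end

section
/- Let φ : ℝ → ℝ be Lipschitz on the interval [0,1] with φ(0) = 0. Suppose there exist a real number p ≥ 1 and a nonnegative measurable function λ : ℝ → ℝ with ∫₀¹ λ(x)^p dx < ∞ such that for almost every x ∈ (0,1) at which φ is differentiable, |φ′(x)| ≤ λ(x)·|φ(x)|·x^{(1−p)/p}. Then φ(x) = 0 for all x ∈ [0,1]. -/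
/-!
The weight `λ(x) x^{(1-p)/p}` need not be integrable at `0`, but it only just fails to be: by
`weight_le` it is at most `2^{p-1} λ(x)^p + 1/(2x)`. The first summand is integrable, and the second
one costs only a factor `x^{1/2}` in Grönwall's inequality, which the Lipschitz bound
`|φ(ε)| ≤ K ε` beats.

Concretely, with `H(x) = ∫₀ˣ 2^p λ^p`, the function `ψ = φ² · exp(-H) / x` is absolutely continuous
on every `[ε, x] ⊆ (0, 1]` and its derivative is a.e. nonpositive, so
`ψ(x) ≤ ψ(ε) ≤ K² ε² / ε = K² ε`. Letting `ε → 0` gives `φ(x) = 0`.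
-/

open MeasureTheory

/-- A form of Young's inequality, with constants making the coefficient of `x⁻¹` small enough: with
`y = x^{-1/p}` the left side is `2 l y^{p-1}`, which is at most `y^p = x⁻¹` if `2 l ≤ y` and at most
`(2 l)^p` otherwise. -/
lemma weight_le {p l x : ℝ} (hp : 1 ≤ p) (hl : 0 ≤ l) (hx : 0 < x) :
    2 * (l * x ^ ((1 - p) / p)) ≤ 2 ^ p * l ^ p + x⁻¹ := by
  have hp0 : 0 < p := by linarith
  set y := x ^ (-(1 / p)) with hy
  have hypos : 0 < y := Real.rpow_pos_of_pos hx _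
  have h1 : x ^ ((1 - p) / p) = y ^ (p - 1) := by
    rw [hy, ← Real.rpow_mul hx.le]
    congr 1
    field_simp
    ring
  have h2 : x⁻¹ = y ^ p := by
    rw [hy, ← Real.rpow_mul hx.le, ← Real.rpow_neg_one]
    congr 1
    field_simp
  have split : ∀ z : ℝ, 0 ≤ z → z * z ^ (p - 1) = z ^ p := by
    intro z hz
    rcases hz.eq_or_lt with rfl | hz
    · rw [Real.zero_rpow hp0.ne', zero_mul]
    · rw [← Real.rpow_one_add' hz.le (by linarith)]
      congr 1
      ring
  rw [h1, h2, ← Real.mul_rpow (by norm_num) hl, ← mul_assoc]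
  have hA : 0 ≤ (2 * l) ^ p := by positivity
  have hB : 0 ≤ y ^ p := by positivity
  rcases le_total (2 * l) y with h | h
  · have := mul_le_mul_of_nonneg_right h (by positivity : 0 ≤ y ^ (p - 1))
    rw [split y hypos.le] at this
    linarith
  · have h3 : y ^ (p - 1) ≤ (2 * l) ^ (p - 1) :=
      Real.rpow_le_rpow hypos.le h (by linarith)
    have := mul_le_mul_of_nonneg_left h3 (by positivity : 0 ≤ 2 * l)
    rw [split (2 * l) (by positivity)] at this
    linarith

lemma absolutelyContinuous_lipschitz_comp {f G : ℝ → ℝ} {a b : ℝ} {K : NNReal} {s : Set ℝ}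
    (hf : AbsolutelyContinuousOnInterval f a b) (hG : LipschitzOnWith K G s)
    (hs : Set.MapsTo f (Set.uIcc a b) s) :
    AbsolutelyContinuousOnInterval (fun x => G (f x)) a b := by
  rw [absolutelyContinuousOnInterval_iff] at hf ⊢
  intro ε hε
  obtain ⟨δ, hδ, h⟩ := hf (ε / (K + 1)) (by positivity)
  refine ⟨δ, hδ, fun E hE hlen => ?_⟩
  have h1 := h E hE hlen
  rw [lt_div_iff₀ (by positivity)] at h1
  refine lt_of_le_of_lt ?_ h1
  rw [Finset.sum_mul]
  refine Finset.sum_le_sum fun i hi => ?_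
  have h2 := hG.dist_le_mul _ (hs (hE.1 i hi).1) _ (hs (hE.1 i hi).2)
  nlinarith [dist_nonneg (x := f (E.2 i).1) (y := f (E.2 i).2)]

lemma absolutelyContinuous_exp_neg {f : ℝ → ℝ} {a b : ℝ}
    (hf : AbsolutelyContinuousOnInterval f a b) :
    AbsolutelyContinuousOnInterval (fun x => Real.exp (-f x)) a b := by
  have hc : IsCompact (f '' Set.uIcc a b) := isCompact_uIcc.image_of_continuousOn hf.continuousOn
  obtain ⟨m, hm⟩ := hc.bddBelow
  obtain ⟨M, hM⟩ := hc.bddAbove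
  have hexp : ContDiff ℝ 1 (fun t : ℝ => Real.exp (-t)) := by fun_prop
  obtain ⟨K, hK⟩ := hexp.contDiffOn.exists_lipschitzOnWith (s := Set.Icc m M) (by norm_num)
    (convex_Icc _ _) isCompact_Icc
  exact absolutelyContinuous_lipschitz_comp (G := fun t => Real.exp (-t)) hf hK fun x hx =>
    ⟨hm (Set.mem_image_of_mem f hx), hM (Set.mem_image_of_mem f hx)⟩

lemma absolutelyContinuous_le {f : ℝ → ℝ} {a b : ℝ} (hab : a ≤ b)
    (hf : AbsolutelyContinuousOnInterval f a b)
    (hd : ∀ᵐ x, x ∈ Set.Ioo a b → deriv f x ≤ 0) : f b ≤ f a := by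
  have h := hf.integral_deriv_eq_sub
  have h2 : ∫ x in a..b, deriv f x ≤ 0 := by
    rw [intervalIntegral.integral_of_le hab, integral_Ioc_eq_integral_Ioo]
    exact setIntegral_nonpos_of_ae_restrict ((ae_restrict_iff' measurableSet_Ioo).2 hd)
  linarith

/-- Lemma 3.3: if `φ` is Lipschitz on `[0,1]` with `φ(0) = 0`, and there exist
`p ≥ 1` and a nonnegative `λ ∈ L^p([0,1])` such that
`|φ'(x)| ≤ λ(x)·|φ(x)|·x^{(1-p)/p}` a.e. on `(0,1)`, then `φ ≡ 0` on `[0,1]`. -/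
theorem lipschitz_ode_uniqueness (φ : ℝ → ℝ)
    (hLip : ∃ K : NNReal, LipschitzOnWith K φ (Set.Icc 0 1))
    (hφ0 : φ 0 = 0)
    (p : ℝ) (hp : 1 ≤ p)
    (lam : ℝ → ℝ) (hlammeas : Measurable lam)
    (hlam0 : ∀ x ∈ Set.Icc (0:ℝ) 1, 0 ≤ lam x)
    (hlamint : IntegrableOn (fun x => lam x ^ p) (Set.Icc (0:ℝ) 1) volume)
    (hineq : ∀ᵐ x, x ∈ Set.Ioo (0:ℝ) 1 → DifferentiableAt ℝ φ x →
      |deriv φ x| ≤ lam x * |φ x| * x ^ ((1 - p) / p)) :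
    ∀ x ∈ Set.Icc (0:ℝ) 1, φ x = 0 := by
  obtain ⟨K, hK⟩ := hLip
  have hbound : ∀ x ∈ Set.Icc (0:ℝ) 1, |φ x| ≤ K * x := by
    intro x hx
    have := hK.dist_le_mul x hx 0 (by simp)
    rwa [hφ0, Real.dist_eq, Real.dist_eq, sub_zero, sub_zero, abs_of_nonneg hx.1] at this
  set g : ℝ → ℝ := fun x => 2 ^ p * lam x ^ p with hg
  have hgint : IntervalIntegrable g volume 0 1 :=
    (intervalIntegrable_iff_integrableOn_Icc_of_le zero_le_one).2 (hlamint.const_mul _)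
  have hg0 : ∀ x ∈ Set.Icc (0:ℝ) 1, 0 ≤ g x := fun x hx =>
    mul_nonneg (by positivity) (Real.rpow_nonneg (hlam0 x hx) _)
  set H : ℝ → ℝ := fun x => ∫ t in (0:ℝ)..x, g t with hH
  have hHac : AbsolutelyContinuousOnInterval H 0 1 :=
    hgint.absolutelyContinuousOnInterval_intervalIntegral (by simp)
  have hH0 : ∀ x ∈ Set.Icc (0:ℝ) 1, 0 ≤ H x := fun x hx =>
    intervalIntegral.integral_nonneg hx.1 fun t ht => hg0 t ⟨ht.1, ht.2.trans hx.2⟩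
  have hφac : AbsolutelyContinuousOnInterval φ 0 1 :=
    LipschitzOnWith.absolutelyContinuousOnInterval (by rwa [Set.uIcc_of_le zero_le_one])
  have hHderiv := hgint.ae_hasDerivAt_integral
  have hφdiff := hφac.ae_differentiableAt
  set ψ : ℝ → ℝ := fun x => φ x * φ x * Real.exp (-H x) * x⁻¹ with hψ
  have hψd : ∀ᵐ x, x ∈ Set.Ioo (0:ℝ) 1 → deriv ψ x ≤ 0 := by
    filter_upwards [hHderiv, hφdiff, hineq] with x h1 h2 h3 hx
    have hx' : x ∈ Set.Icc (0:ℝ) 1 := ⟨hx.1.le, hx.2.le⟩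
    have hxu : x ∈ Set.uIcc (0:ℝ) 1 := by rwa [Set.uIcc_of_le zero_le_one]
    have hdφ := h2 hxu
    have hdH : HasDerivAt H (g x) x := h1 hxu 0 (by simp)
    have hd := ((hdφ.hasDerivAt.mul hdφ.hasDerivAt).mul hdH.neg.exp).mul
      (hasDerivAt_inv hx.1.ne')
    have hw := weight_le hp (hlam0 x hx') hx.1
    have hφφ : 2 * (φ x * deriv φ x) ≤ (g x + x⁻¹) * (φ x * φ x) := by
      have h4 : φ x * deriv φ x ≤ |φ x| * |deriv φ x| := by
        rw [← abs_mul]; exact le_abs_self _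
      have h5 := mul_le_mul_of_nonneg_left (h3 hx hdφ) (abs_nonneg (φ x))
      have h6 := mul_le_mul_of_nonneg_right hw (mul_self_nonneg (φ x))
      have h7 := abs_mul_abs_self (φ x)
      have h8 : |φ x| * (lam x * |φ x| * x ^ ((1 - p) / p)) =
          lam x * x ^ ((1 - p) / p) * (φ x * φ x) := by
        rw [← h7]; ring
      rw [h8] at h5
      simp only [hg]
      linarith
    have hkey : deriv ψ x = Real.exp (-H x) * x⁻¹ *
        (2 * (φ x * deriv φ x) - (g x + x⁻¹) * (φ x * φ x)) := by
      refine hd.deriv.trans ?_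
      simp only [Pi.mul_apply, Pi.neg_apply]
      have := hx.1.ne'
      field_simp
      ring
    rw [hkey]
    have hxi : 0 < x⁻¹ := inv_pos.2 hx.1
    exact mul_nonpos_of_nonneg_of_nonpos (by positivity) (by linarith)
  intro x hx
  rcases hx.1.eq_or_lt with rfl | hxpos
  · exact hφ0
  have hmain : ∀ ε ∈ Set.Ioo 0 x, ψ x ≤ K ^ 2 * ε := by
    intro ε hε
    have hsub : Set.uIcc ε x ⊆ Set.uIcc (0:ℝ) 1 := by
      rw [Set.uIcc_of_le hε.2.le, Set.uIcc_of_le zero_le_one]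
      exact Set.Icc_subset_Icc hε.1.le hx.2
    have hinv : AbsolutelyContinuousOnInterval (fun t : ℝ => t⁻¹) ε x := by
      refine ContDiffOn.absolutelyContinuousOnInterval fun t ht => ?_
      rw [Set.uIcc_of_le hε.2.le] at ht
      exact (contDiffAt_inv ℝ (hε.1.trans_le ht.1).ne').contDiffWithinAt
    have hφ' := hφac.mono hsub
    have hψac : AbsolutelyContinuousOnInterval ψ ε x :=
      ((hφ'.fun_mul hφ').fun_mul (absolutelyContinuous_exp_neg (hHac.mono hsub))).fun_mul hinv
    refine (absolutelyContinuous_le hε.2.le hψac ?_).trans ?_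
    · filter_upwards [hψd] with t ht htI
      exact ht ⟨hε.1.trans htI.1, htI.2.trans_le hx.2⟩
    · have hεI : ε ∈ Set.Icc (0:ℝ) 1 := ⟨hε.1.le, hε.2.le.trans hx.2⟩
      have hb : φ ε * φ ε ≤ (K * ε) * (K * ε) := by
        rw [← abs_mul_abs_self]
        exact mul_self_le_mul_self (abs_nonneg _) (hbound ε hεI)
      have he : Real.exp (-H ε) ≤ 1 := Real.exp_le_one_iff.2 (by linarith [hH0 ε hεI])
      have hεi : 0 < ε⁻¹ := inv_pos.2 hε.1
      calc ψ ε ≤ (K * ε) * (K * ε) * 1 * ε⁻¹ := by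
            simp only [hψ]
            gcongr
            exact mul_self_nonneg _
        _ = K ^ 2 * ε := by
            have := hε.1.ne'
            field_simp
  have hψx : ψ x ≤ 0 := by
    have ht : Filter.Tendsto (fun ε : ℝ => (K : ℝ) ^ 2 * ε) (nhdsWithin 0 (Set.Ioi 0)) (nhds 0) := by
      have : Continuous fun ε : ℝ => (K : ℝ) ^ 2 * ε := by fun_prop
      simpa using (this.tendsto 0).mono_left nhdsWithin_le_nhds
    exact ge_of_tendsto ht (Filter.eventually_of_mem (Ioo_mem_nhdsGT hxpos) hmain)
  by_contra hne
  have : 0 < ψ x := by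
    have h1 : 0 < φ x * φ x := mul_self_pos.2 hne
    have h2 : 0 < x⁻¹ := inv_pos.2 hxpos
    simp only [hψ]
    positivity
  linarith
end

section
/- Let n ≥ 1, let Ω be a nonempty open connected subset of ℝⁿ, and let u : Ω → ℝ be continuous with zero set Z_u = {x ∈ Ω : u(x) = 0}. Suppose there is an integer k ≥ 1 such that v(x) = (u(x))^k is locally Lipschitz on Ω. Then u is differentiable at almost every point of Ω ∖ Z_u. Moreover, if V : Ω → ℝ is a nonnegative measurable function with x ↦ V(x)ⁿ integrable on every compact subset of Ω, such that for almost every x ∈ Ω ∖ Z_u at which u is differentiable one has ‖fderiv u x‖ ≤ V(x)·|u(x)|, and if Z_u ≠ ∅, then u is identically 0 on Ω. -/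
/-!
The function `v = u ^ k` is locally Lipschitz, hence differentiable almost everywhere by Rademacher's
theorem, and off the zero set `u = ± |v| ^ (1 / k)` locally, which gives the first claim.

For the second claim, `‖∇v‖ ≤ k V |v|` almost everywhere off the zero set. It suffices to show that the
zero set of `u` is open, so let `v x₀ = 0` and restrict `v` to the rays issuing from `x₀`. In polar
coordinates, on almost every ray the gradient bound holds at almost every radius `s`, and
`s ^ (n - 1) * V ^ n` is integrable in `s`. Young's inequality in the form `mul_le_young` bounds `k V`
by `1 / (2 s)` plus a multiple of `s ^ (n - 1) * V ^ n`. Hence along the ray `log |v|` can decrease, when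
`s` tends to the last zero `r₁` of `v`, by at most `(1/2) log (1 / (s - r₁)) + O(1)`, while
`|v| ≤ L (s - r₁)` makes it decrease at least like `log (1 / (s - r₁))`. This contradiction
(`ray_vanishing`) shows that `v` vanishes on almost every ray, hence by continuity on a ball around `x₀`
(`vanishing_on_ball`).
-/

open MeasureTheory
open Set Metric Filter Topology

/-- One-dimensional step. The zero of `g` at `0` propagates to `R` because `log |g|` has derivative at
most `1 / (2 s)` up to an integrable error, so as `s` decreases to a zero `r₁` it can drop by at
most `(1/2) log (1 / (s - r₁)) + O(1)`, whereas the Lipschitz bound forces it to drop at least like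
`log (1 / (s - r₁))`. -/
lemma ray_vanishing {g φ : ℝ → ℝ} {R : ℝ} {L : NNReal} (hR : 0 < R)
    (hg : LipschitzOnWith L g (Icc 0 R)) (hg0 : g 0 = 0)
    (hφ : IntegrableOn φ (Ioc 0 R)) (hφ0 : ∀ s ∈ Ioc 0 R, 0 ≤ φ s)
    (hderiv : ∀ᵐ s : ℝ, s ∈ Ioc 0 R → g s ≠ 0 →
      DifferentiableAt ℝ g s ∧ |deriv g s| ≤ (2⁻¹ * s⁻¹ + φ s) * |g s|) :
    g R = 0 := by
  by_contra hgR
  have hcont : ContinuousOn g (Icc 0 R) := hg.continuousOn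
  -- `r₁` is the last zero of `g` before `R`
  obtain ⟨r₁, ⟨hr₁, hgr₁⟩, hmax⟩ : ∃ r₁ ∈ {s ∈ Icc 0 R | g s = 0},
      ∀ s ∈ {s ∈ Icc 0 R | g s = 0}, s ≤ r₁ := by
    have hcpt : IsCompact {s ∈ Icc 0 R | g s = 0} :=
      isCompact_Icc.of_isClosed_subset
        (hcont.preimage_isClosed_of_isClosed isClosed_Icc isClosed_singleton) (fun s hs => hs.1)
    exact hcpt.exists_isGreatest ⟨0, ⟨le_rfl, hR.le⟩, hg0⟩
  have hr₁R : r₁ < R := lt_of_le_of_ne hr₁.2 (fun h => hgR (h ▸ hgr₁))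
  set A := ∫ s in Ioc 0 R, φ s with hA
  have key : ∀ r ∈ Ioo r₁ R, Real.log (g R) - Real.log (g r) ≤
      2⁻¹ * (Real.log R - Real.log r) + A := by
    intro r hr
    have hr0 : 0 < r := hr₁.1.trans_lt hr.1
    have hsub : Icc r R ⊆ Icc 0 R := Icc_subset_Icc_left hr0.le
    have hne : ∀ s ∈ Icc r R, g s ≠ 0 := fun s hs h0 =>
      absurd (hmax s ⟨hsub hs, h0⟩) (not_le.2 (hr.1.trans_le hs.1))
    have hIm := (hcont.mono hsub).image_Icc hr.2.le
    have hlog : ∃ C, LipschitzOnWith C Real.log (g '' Icc r R) := by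
      rw [hIm]
      refine ContDiffOn.exists_lipschitzOnWith (n := 1) ?_ (by simp) (convex_Icc _ _) isCompact_Icc
      rw [← hIm]
      rintro _ ⟨s, hs, rfl⟩
      exact (Real.contDiffAt_log.2 (hne s hs)).contDiffWithinAt
    obtain ⟨C, hC⟩ := hlog
    have hac : AbsolutelyContinuousOnInterval (Real.log ∘ g) r R := by
      refine LipschitzOnWith.absolutelyContinuousOnInterval (K := C * L) ?_
      rw [uIcc_of_le hr.2.le]
      exact hC.comp (hg.mono hsub) (mapsTo_image _ _)
    have hint : IntervalIntegrable (fun s : ℝ => 2⁻¹ * s⁻¹) volume r R := by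
      refine (intervalIntegral.intervalIntegrable_inv (fun s hs => ?_) continuousOn_id).const_mul _
      rw [uIcc_of_le hr.2.le] at hs
      exact (hr0.trans_le hs.1).ne'
    have hsub' : Ioc r R ⊆ Ioc 0 R := Ioc_subset_Ioc_left hr0.le
    have hφr : IntervalIntegrable φ volume r R :=
      (intervalIntegrable_iff_integrableOn_Ioc_of_le hr.2.le).2 (hφ.mono_set hsub')
    have h1 := hac.integral_deriv_eq_sub
    have h2 : ∫ s in r..R, deriv (Real.log ∘ g) s ≤ ∫ s in r..R, (2⁻¹ * s⁻¹ + φ s) := by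
      refine intervalIntegral.integral_mono_ae_restrict hr.2.le hac.intervalIntegrable_deriv
        (hint.add hφr) ?_
      rw [EventuallyLE, ae_restrict_iff' measurableSet_Icc]
      filter_upwards [hderiv] with s hs hsI
      have hs0 := hne s hsI
      obtain ⟨hd, hb⟩ := hs ⟨hr0.trans_le hsI.1, hsI.2⟩ hs0
      have : deriv (Real.log ∘ g) s = deriv g s / g s := (hd.hasDerivAt.log hs0).deriv
      rw [this]
      refine (le_abs_self _).trans ?_
      rw [abs_div, div_le_iff₀ (abs_pos.2 hs0)]
      exact hb
    have h3 : ∫ s in r..R, (2⁻¹ * s⁻¹ + φ s) = 2⁻¹ * Real.log (R / r) + ∫ s in r..R, φ s := by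
      rw [intervalIntegral.integral_add hint hφr, intervalIntegral.integral_const_mul,
        integral_inv_of_pos hr0 hR]
    have h4 : ∫ s in r..R, φ s ≤ A := by
      rw [intervalIntegral.integral_of_le hr.2.le]
      refine setIntegral_mono_set hφ ?_ hsub'.eventuallyLE
      rw [EventuallyLE, ae_restrict_iff' measurableSet_Ioc]
      exact Eventually.of_forall hφ0
    rw [Real.log_div hR.ne' hr0.ne'] at h3
    simp only [Function.comp_apply] at h1
    linarith
  have hL : 0 < (L : ℝ) := by
    rcases (NNReal.coe_nonneg L).eq_or_lt with h | h
    · have := hg.dist_le_mul R ⟨hR.le, le_rfl⟩ 0 ⟨le_rfl, hR.le⟩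
      rw [← h, zero_mul, hg0, dist_zero_right] at this
      exact absurd (norm_le_zero_iff.1 this) hgR
    · exact h
  -- since `|g r| ≤ L (r - r₁)`, letting `r` decrease to `r₁` contradicts `key`
  have hlim : Tendsto (fun r => Real.log (r - r₁)) (𝓝[>] r₁) atBot := by
    refine Real.tendsto_log_nhdsGT_zero.comp ?_
    refine tendsto_nhdsWithin_iff.2 ⟨?_, ?_⟩
    · have : Tendsto (fun r => r - r₁) (𝓝 r₁) (𝓝 (r₁ - r₁)) := by
        exact (continuous_id.sub continuous_const).tendsto r₁
      rw [sub_self] at this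
      exact this.mono_left nhdsWithin_le_nhds
    · filter_upwards [self_mem_nhdsWithin] with r hr using sub_pos.2 (mem_Ioi.1 hr)
  obtain ⟨r, hrlog, hr⟩ := ((hlim.eventually_lt_atBot
    (2 * (Real.log (g R) - A - 2⁻¹ * Real.log R - Real.log L))).and
    (Ioo_mem_nhdsGT hr₁R)).exists
  have hr0 : 0 < r := hr₁.1.trans_lt hr.1
  have hne : g r ≠ 0 := fun h0 =>
    absurd (hmax r ⟨⟨hr0.le, hr.2.le⟩, h0⟩) (not_le.2 hr.1)
  have hbound : |g r| ≤ L * (r - r₁) := by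
    have := hg.dist_le_mul r ⟨hr0.le, hr.2.le⟩ r₁ hr₁
    rwa [hgr₁, dist_zero_right, Real.norm_eq_abs, Real.dist_eq,
      abs_of_pos (sub_pos.2 hr.1)] at this
  have h5 : Real.log (g r) ≤ Real.log L + Real.log (r - r₁) := by
    rw [← Real.log_abs (g r), ← Real.log_mul hL.ne' (sub_pos.2 hr.1).ne']
    exact Real.log_le_log (abs_pos.2 hne) hbound
  have h6 : Real.log (r - r₁) ≤ Real.log r :=
    Real.log_le_log (sub_pos.2 hr.1) (by linarith [hr₁.1])
  have := key r hr
  linarith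

section Polar
variable {E : Type*} [NormedAddCommGroup E] [NormedSpace ℝ E] [MeasurableSpace E]
  [BorelSpace E] [FiniteDimensional ℝ E] (μ : Measure E) [μ.IsAddHaarMeasure]

/-- The weight `r ^ d` is positive on `(0, ∞)`, so null sets of `volumeIoiPow d` are Lebesgue null. -/
lemma ae_volumeIoiPow {d : ℕ} {P : ℝ → Prop}
    (h : ∀ᵐ r : Ioi (0 : ℝ) ∂(Measure.volumeIoiPow d), P r) : ∀ᵐ r : ℝ, 0 < r → P r := by
  rw [Measure.volumeIoiPow, ae_withDensity_iff (by fun_prop)] at h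
  have hvol : ∀ᵐ r : Ioi (0 : ℝ) ∂(Measure.comap Subtype.val volume), P r := by
    filter_upwards [h] with r hr
    exact hr (by simpa using pow_pos r.2 d)
  exact (ae_restrict_iff' measurableSet_Ioi).1
    ((ae_restrict_iff_subtype (p := P) measurableSet_Ioi).2 hvol)

/-- Polar coordinates: a null set meets almost every ray from the origin in a null set. -/
lemma ae_ae_ray {P : E → Prop} (hP : ∀ᵐ x ∂μ, P x) :
    ∀ᵐ θ : sphere (0 : E) 1 ∂μ.toSphere, ∀ᵐ r : ℝ, 0 < r → P (r • (θ : E)) := by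
  have h1 : ∀ᵐ x : ({0}ᶜ : Set E) ∂(μ.comap Subtype.val), P x :=
    (ae_restrict_iff_subtype (p := P) (measurableSet_singleton _).compl).1 (ae_restrict_of_ae hP)
  have mp := (μ.measurePreserving_homeomorphUnitSphereProd (E := E))
  have h2 : ∀ᵐ p ∂(μ.toSphere.prod (Measure.volumeIoiPow (Module.finrank ℝ E - 1))),
      P ((homeomorphUnitSphereProd E).symm p : E) :=
    (MeasurePreserving.symm (homeomorphUnitSphereProd E).toMeasurableEquiv
      mp).quasiMeasurePreserving.ae h1
  filter_upwards [Measure.ae_ae_of_ae_prod h2] with θ hθ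
  exact ae_volumeIoiPow (P := fun r => P (r • (θ : E))) (by simpa using hθ)

/-- Polar coordinates: a property holding along almost every ray from the origin holds almost
everywhere away from the origin. -/
lemma ae_of_ae_ray {P : E → Prop}
    (hP : ∀ᵐ θ : sphere (0 : E) 1 ∂μ.toSphere, ∀ r : ℝ, 0 < r → P (r • (θ : E))) :
    ∀ᵐ x ∂μ, x ≠ 0 → P x := by
  have mp := (μ.measurePreserving_homeomorphUnitSphereProd (E := E))
  have h1 := mp.quasiMeasurePreserving.ae (Measure.quasiMeasurePreserving_fst.ae hP)
  have h2 : ∀ᵐ x : ({0}ᶜ : Set E) ∂(μ.comap Subtype.val), P x := by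
    filter_upwards [h1] with x hx
    have := hx ‖(x : E)‖ (norm_pos_iff.2 x.2)
    have hx0 : ‖(x : E)‖ ≠ 0 := norm_ne_zero_iff.2 x.2
    simpa [smul_smul, hx0] using this
  exact (ae_restrict_iff' (measurableSet_singleton _).compl).1
    ((ae_restrict_iff_subtype (p := P) (measurableSet_singleton _).compl).2 h2)

/-- Polar coordinates: an integrable function is integrable along almost every ray from the origin,
for the weight `r ^ (dim E - 1)`. -/
lemma ae_integrableOn_ray {f : E → ℝ} (hf : Integrable f μ) :
    ∀ᵐ θ : sphere (0 : E) 1 ∂μ.toSphere, IntegrableOn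
      (fun r : ℝ => r ^ (Module.finrank ℝ E - 1) * f (r • (θ : E))) (Ioi 0) := by
  have mp := (μ.measurePreserving_homeomorphUnitSphereProd (E := E))
  have h1 : Integrable (f ∘ Subtype.val) (μ.comap (Subtype.val : ({0}ᶜ : Set E) → E)) :=
    (integrableOn_iff_comap_subtypeVal (measurableSet_singleton _).compl).1 hf.integrableOn
  have h2 := (MeasurePreserving.symm (homeomorphUnitSphereProd E).toMeasurableEquiv
      mp).integrable_comp_of_integrable h1
  filter_upwards [h2.prod_right_ae] with θ hθ
  rw [Measure.volumeIoiPow, integrable_withDensity_iff_integrable_smul' (by fun_prop)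
    (by simp)] at hθ
  rw [integrableOn_iff_comap_subtypeVal measurableSet_Ioi]
  refine hθ.congr (Eventually.of_forall ?_)
  rintro ⟨r, hr : 0 < r⟩
  simp [ENNReal.toReal_ofReal (pow_pos hr _).le]
end Polar

/-- Splitting of the potential along a ray: either `2 k V s ≤ 1` and the first term dominates, or
`2 k V s ≥ 1` and `k V ≤ k V (2 k V s) ^ (n - 1)`, which is the second term. The factor `2⁻¹ < 1` in
front of `s⁻¹` is what `ray_vanishing` needs. -/
lemma mul_le_young {n k : ℕ} (hn : 1 ≤ n) {V s : ℝ} (hV : 0 ≤ V) (hs : 0 < s) :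
    k * V ≤ 2⁻¹ * s⁻¹ + k * (2 * k) ^ (n - 1) * (s ^ (n - 1) * V ^ n) := by
  have hk : (0 : ℝ) ≤ k := Nat.cast_nonneg k
  have hnV : V ^ n = V ^ (n - 1) * V := by rw [← pow_succ, Nat.sub_add_cancel hn]
  rcases le_total (2 * k * V * s) 1 with h | h
  · have h1 : k * V ≤ 2⁻¹ * s⁻¹ := by
      rw [← mul_inv, ← one_div, le_div_iff₀ (by positivity)]
      linarith
    have : 0 ≤ k * (2 * k) ^ (n - 1) * (s ^ (n - 1) * V ^ n) := by positivity
    linarith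
  · have h1 : 1 ≤ (2 * k * V * s) ^ (n - 1) := one_le_pow₀ h
    have h2 : k * V * 1 ≤ k * V * (2 * k * V * s) ^ (n - 1) := by gcongr
    have h3 : k * V * (2 * k * V * s) ^ (n - 1)
        = k * (2 * k) ^ (n - 1) * (s ^ (n - 1) * V ^ n) := by
      rw [hnV, mul_pow, mul_pow (2 * (k : ℝ))]; ring
    have : 0 ≤ 2⁻¹ * s⁻¹ := by positivity
    linarith

/-- Rademacher's theorem for locally Lipschitz functions. -/
lemma ae_differentiableAt_of_locally_lipschitz {E : Type*} [NormedAddCommGroup E]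
    [NormedSpace ℝ E] [MeasurableSpace E] [BorelSpace E] [FiniteDimensional ℝ E]
    (μ : Measure E) [μ.IsAddHaarMeasure] {Ω : Set E} {v : E → ℝ}
    (hv : ∀ x ∈ Ω, ∃ (K : NNReal) (t : Set E), t ∈ 𝓝 x ∧ t ⊆ Ω ∧ LipschitzOnWith K v t) :
    ∀ᵐ x ∂μ, x ∈ Ω → DifferentiableAt ℝ v x := by
  rw [ae_iff]
  refine measure_null_of_locally_null _ fun x hx => ?_
  obtain ⟨K, t, ht, -, hK⟩ := hv x (Classical.not_imp.1 hx).1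
  refine ⟨_, inter_mem self_mem_nhdsWithin
    (mem_nhdsWithin_of_mem_nhds (interior_mem_nhds.2 ht)), ?_⟩
  have h := (hK.mono interior_subset).ae_differentiableWithinAt_of_mem (μ := μ)
  have h' : ∀ᵐ y ∂μ, y ∈ interior t → DifferentiableAt ℝ v y := by
    filter_upwards [h] with y hy hyt
    exact (hy hyt).differentiableAt (isOpen_interior.mem_nhds hyt)
  rw [ae_iff] at h'
  refine measure_mono_null ?_ h'
  exact fun y hy hc => (Classical.not_imp.1 hy.1).2 (hc hy.2)

/-- Near `x` the sign of `u` is constant, so that `u = ± |u ^ k| ^ (1 / k)` there. -/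
lemma differentiableAt_of_pow {E : Type*} [NormedAddCommGroup E] [NormedSpace ℝ E]
    {u : E → ℝ} {x : E} {k : ℕ} (hk : 1 ≤ k) (hc : ContinuousAt u x) (hx : u x ≠ 0)
    (hv : DifferentiableAt ℝ (fun y => u y ^ k) x) : DifferentiableAt ℝ u x := by
  have hvx : u x ^ k ≠ 0 := pow_ne_zero k hx
  have habs : DifferentiableAt ℝ (fun y => |u y ^ k| ^ ((k : ℝ)⁻¹)) x :=
    (hv.abs hvx).rpow_const (Or.inl (abs_ne_zero.2 hvx))
  have hroot : ∀ y, |u y ^ k| ^ ((k : ℝ)⁻¹) = |u y| := fun y => by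
    rw [abs_pow, Real.pow_rpow_inv_natCast (abs_nonneg _) (by omega)]
  simp only [hroot] at habs
  rcases lt_or_gt_of_ne hx with h | h
  · refine habs.neg.congr_of_eventuallyEq ?_
    filter_upwards [hc.eventually (gt_mem_nhds h)] with y hy
    simp [abs_of_neg hy]
  · refine habs.congr_of_eventuallyEq ?_
    filter_upwards [hc.eventually (lt_mem_nhds h)] with y hy
    simp [abs_of_pos hy]

lemma norm_fderiv_pow_le {E : Type*} [NormedAddCommGroup E] [NormedSpace ℝ E]
    {u : E → ℝ} {x : E} {k : ℕ} (hk : 1 ≤ k) {c : ℝ} (hu : DifferentiableAt ℝ u x)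
    (h : ‖fderiv ℝ u x‖ ≤ c * |u x|) :
    ‖fderiv ℝ (fun y => u y ^ k) x‖ ≤ k * c * |u x ^ k| := by
  rw [(hu.hasFDerivAt.pow k).fderiv]
  obtain ⟨m, rfl⟩ : ∃ m, k = m + 1 := ⟨k - 1, by omega⟩
  rw [norm_smul]
  have : ‖((m + 1 : ℕ) • u x ^ (m + 1 - 1))‖ = ((m + 1 : ℕ) : ℝ) * |u x| ^ m := by
    simp [abs_of_nonneg (by positivity : (0 : ℝ) ≤ (m : ℝ) + 1)]
  rw [this, abs_pow]
  calc ((m + 1 : ℕ) : ℝ) * |u x| ^ m * ‖fderiv ℝ u x‖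
      ≤ ((m + 1 : ℕ) : ℝ) * |u x| ^ m * (c * |u x|) := by gcongr
    _ = _ := by ring

/-- A Lipschitz function `v` with `‖∇v‖ ≤ k V |v|` off its zero set and `V ^ n` integrable on a
closed ball centred at a zero of `v` vanishes inside it: `ray_vanishing` applies on almost every ray
from the centre. -/
lemma vanishing_on_ball {E : Type*} [NormedAddCommGroup E] [NormedSpace ℝ E]
    [MeasurableSpace E] [BorelSpace E] [FiniteDimensional ℝ E]
    (μ : Measure E) [μ.IsAddHaarMeasure] {n : ℕ} (hn : 1 ≤ n) (hdim : Module.finrank ℝ E = n)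
    {v V : E → ℝ} {k : ℕ} {K : NNReal} {x₀ : E} {R : ℝ}
    (hLip : LipschitzOnWith K v (closedBall x₀ R)) (hv0 : v x₀ = 0)
    (hV0 : ∀ x ∈ closedBall x₀ R, 0 ≤ V x)
    (hVint : IntegrableOn (fun x => V x ^ n) (closedBall x₀ R) μ)
    (hgrad : ∀ᵐ x ∂μ, x ∈ closedBall x₀ R → v x ≠ 0 →
      DifferentiableAt ℝ v x ∧ ‖fderiv ℝ v x‖ ≤ k * V x * |v x|) :
    ∀ x ∈ ball x₀ R, v x = 0 := by
  have hmem : ∀ (θ : sphere (0 : E) 1) (r : ℝ), 0 ≤ r → r ≤ R →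
      x₀ + r • (θ : E) ∈ closedBall x₀ R := fun θ r h0 hr => by
    have : ‖(θ : E)‖ = 1 := by simp
    simp [norm_smul, this, abs_of_nonneg h0, hr]
  -- the hypotheses, restricted to almost every ray issuing from `x₀`
  have hray1 := ae_ae_ray μ ((measurePreserving_add_left μ x₀).quasiMeasurePreserving.ae hgrad)
  have hray2 := ae_integrableOn_ray μ
    ((measurePreserving_add_left μ x₀).integrable_comp_of_integrable
    (hVint.integrable_indicator measurableSet_closedBall))
  have hrays : ∀ᵐ θ : sphere (0 : E) 1 ∂μ.toSphere, ∀ r : ℝ, 0 < r →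
      (r ≤ R → v (x₀ + r • (θ : E)) = 0) := by
    filter_upwards [hray1, hray2] with θ h1 h2 ρ hρ hρR
    have hθ : ‖(θ : E)‖ = 1 := by simp
    have hmem' : ∀ s ∈ Icc 0 ρ, x₀ + s • (θ : E) ∈ closedBall x₀ R :=
      fun s hs => hmem θ s hs.1 (hs.2.trans hρR)
    have hline : LipschitzWith 1 (fun s : ℝ => x₀ + s • (θ : E)) := by
      refine LipschitzWith.of_dist_le_mul fun a b => ?_
      simp [dist_eq_norm, ← sub_smul, norm_smul, hθ]
    refine ray_vanishing (g := fun s => v (x₀ + s • (θ : E)))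
      (φ := fun s => k * (2 * k) ^ (n - 1) * (s ^ (n - 1) * V (x₀ + s • (θ : E)) ^ n))
      (L := K * 1) hρ (hLip.comp hline.lipschitzOnWith hmem') (by simpa using hv0) ?_ ?_ ?_
    · refine Integrable.const_mul ?_ _
      refine IntegrableOn.congr_fun (h2.mono_set Ioc_subset_Ioi_self) (fun s hs => ?_)
        measurableSet_Ioc
      simp only [Function.comp_apply, hdim]
      rw [indicator_of_mem (hmem' s ⟨hs.1.le, hs.2⟩)]
    · intro s hs
      have := hV0 _ (hmem' s ⟨hs.1.le, hs.2⟩)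
      have := hs.1.le
      positivity
    · filter_upwards [h1] with s hs hsI hne
      have hmem_s := hmem' s ⟨hsI.1.le, hsI.2⟩
      obtain ⟨hd, hb⟩ := hs hsI.1 hmem_s hne
      have hl : HasDerivAt (fun s : ℝ => x₀ + s • (θ : E)) (θ : E) s := by
        simpa using ((hasDerivAt_id s).smul_const (θ : E)).const_add x₀
      have hder : HasDerivAt (fun s : ℝ => v (x₀ + s • (θ : E)))
          (fderiv ℝ v (x₀ + s • (θ : E)) θ) s := hd.hasFDerivAt.comp_hasDerivAt s hl
      refine ⟨hder.differentiableAt, ?_⟩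
      rw [hder.deriv]
      calc |fderiv ℝ v (x₀ + s • (θ : E)) θ|
          ≤ ‖fderiv ℝ v (x₀ + s • (θ : E))‖ * ‖(θ : E)‖ := by
            rw [← Real.norm_eq_abs]
            exact ContinuousLinearMap.le_opNorm _ _
        _ ≤ k * V (x₀ + s • (θ : E)) * |v (x₀ + s • (θ : E))| := by rwa [hθ, mul_one]
        _ ≤ _ := by
          gcongr
          exact mul_le_young hn (hV0 _ hmem_s) hsI.1
  have hae : ∀ᵐ x ∂μ, x ≠ 0 → (‖x‖ ≤ R → v (x₀ + x) = 0) := by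
    refine ae_of_ae_ray μ (P := fun x => ‖x‖ ≤ R → v (x₀ + x) = 0) ?_
    filter_upwards [hrays] with θ h r hr hle
    have hθ : ‖(θ : E)‖ = 1 := by simp
    exact h r hr (by simpa [norm_smul, hθ, abs_of_pos hr] using hle)
  have hae' : ∀ᵐ x ∂μ, ‖x - x₀‖ ≤ R → v x = 0 := by
    filter_upwards [(measurePreserving_add_left μ (-x₀)).quasiMeasurePreserving.ae hae]
      with x hx hxR
    by_cases h : x = x₀
    · rw [h, hv0]
    · have := hx (by rwa [neg_add_eq_sub, sub_ne_zero]) (by rwa [neg_add_eq_sub])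
      simpa using this
  have heq : v =ᵐ[μ.restrict (ball x₀ R)] fun _ => (0 : ℝ) := by
    rw [EventuallyEq, ae_restrict_iff' measurableSet_ball]
    filter_upwards [hae'] with x hx hxb
    exact hx (by rw [← dist_eq_norm]; exact (mem_ball.1 hxb).le)
  exact Measure.eqOn_open_of_ae_eq heq isOpen_ball (hLip.continuousOn.mono ball_subset_closedBall)
    continuousOn_const

/-- Corollary 3.8: if `u` is a continuous `k`-th root of a locally Lipschitz
function on a domain `Ω ⊆ ℝⁿ`, then `u` is differentiable a.e. on `Ω ∖ Z_u`;
moreover if `|∇u| ≤ V|u|` a.e. on `Ω ∖ Z_u` with `V ≥ 0` measurable and `Vⁿ`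
locally integrable, and `Z_u ≠ ∅`, then `u ≡ 0` on `Ω`. -/
theorem kth_root_unique_continuation (n : ℕ) (hn : 1 ≤ n)
    (Ω : Set (EuclideanSpace ℝ (Fin n))) (hΩopen : IsOpen Ω) (hΩconn : IsConnected Ω)
    (u : EuclideanSpace ℝ (Fin n) → ℝ) (hu : ContinuousOn u Ω)
    (k : ℕ) (hk : 1 ≤ k)
    (hvLip : ∀ x ∈ Ω, ∃ (K : NNReal) (t : Set (EuclideanSpace ℝ (Fin n))),
      t ∈ nhds x ∧ t ⊆ Ω ∧ LipschitzOnWith K (fun y => (u y) ^ k) t) :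
    (∀ᵐ x, x ∈ Ω \ {y ∈ Ω | u y = 0} → DifferentiableAt ℝ u x) ∧
    (∀ V : EuclideanSpace ℝ (Fin n) → ℝ,
      (∀ x ∈ Ω, 0 ≤ V x) → Measurable V →
      (∀ K : Set (EuclideanSpace ℝ (Fin n)), K ⊆ Ω → IsCompact K →
        IntegrableOn (fun x => V x ^ n) K volume) →
      (∀ᵐ x, x ∈ Ω \ {y ∈ Ω | u y = 0} → DifferentiableAt ℝ u x →
        ‖fderiv ℝ u x‖ ≤ V x * |u x|) →
      {y ∈ Ω | u y = 0} ≠ ∅ →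
      ∀ x ∈ Ω, u x = 0) := by
  have hvdiff := ae_differentiableAt_of_locally_lipschitz volume hvLip
  have hudiff : ∀ᵐ x, x ∈ Ω \ {y ∈ Ω | u y = 0} → DifferentiableAt ℝ u x := by
    filter_upwards [hvdiff] with x hx hxΩ
    exact differentiableAt_of_pow hk (hu.continuousAt (hΩopen.mem_nhds hxΩ.1))
      (fun h0 => hxΩ.2 ⟨hxΩ.1, h0⟩) (hx hxΩ.1)
  refine ⟨hudiff, fun V hV0 _ hVint hgrad hZ => ?_⟩
  have hk0 : k ≠ 0 := by omega
  have hlocal : ∀ x₀ ∈ Ω, u x₀ = 0 → ∃ R > 0, ∀ x ∈ ball x₀ R, u x = 0 := by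
    intro x₀ hx₀ h0
    obtain ⟨K, t, ht, htΩ, hK⟩ := hvLip x₀ hx₀
    obtain ⟨R, hR, hRt⟩ := nhds_basis_closedBall.mem_iff.1 ht
    refine ⟨R, hR, fun x hx => ?_⟩
    have hzero := vanishing_on_ball volume hn (by simp) (v := fun y => u y ^ k) (V := V) (k := k)
      (hK.mono hRt) (by simp [h0, hk0]) (fun x hx => hV0 x (htΩ (hRt hx)))
      (hVint _ (hRt.trans htΩ) (isCompact_closedBall x₀ R)) ?_ x hx
    · exact (pow_eq_zero_iff hk0).1 hzero
    · filter_upwards [hvdiff, hudiff, hgrad] with y hvy huy hy hyR hne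
      have hyΩ := htΩ (hRt hyR)
      have hyZ : y ∈ Ω \ {y ∈ Ω | u y = 0} :=
        ⟨hyΩ, fun h => hne ((pow_eq_zero_iff hk0).2 h.2)⟩
      exact ⟨hvy hyΩ, norm_fderiv_pow_le hk (huy hyZ) (hy hyZ (huy hyZ))⟩
  have hopen0 : IsOpen {y ∈ Ω | u y = 0} := by
    refine Metric.isOpen_iff.2 ?_
    rintro x ⟨hxΩ, hx0⟩
    obtain ⟨R, hR, h⟩ := hlocal x hxΩ hx0
    obtain ⟨R', hR', h'⟩ := Metric.isOpen_iff.1 hΩopen x hxΩ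
    exact ⟨min R R', lt_min hR hR', fun y hy =>
      ⟨h' (ball_subset_ball (min_le_right _ _) hy), h y (ball_subset_ball (min_le_left _ _) hy)⟩⟩
  have hopen1 : IsOpen (Ω ∩ u ⁻¹' {0}ᶜ) :=
    hu.isOpen_inter_preimage hΩopen isOpen_compl_singleton
  obtain ⟨z, hz⟩ := Set.nonempty_iff_ne_empty.2 hZ
  have hsub := hΩconn.isPreconnected.subset_left_of_subset_union hopen0 hopen1
    (Set.disjoint_left.2 fun y hy hy' => hy'.2 hy.2)
    (fun y hy => (em (u y = 0)).imp (fun h => ⟨hy, h⟩) (fun h => ⟨hy, h⟩)) ⟨z, hz.1, hz⟩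
  exact fun x hx => (hsub hx).2
end

section
/- Let n ≥ 1, let Ω be a nonempty open connected subset of ℝⁿ, x₀ ∈ Ω, y₀ ∈ ℝ, and let f : ℝ → ℝⁿ be Lipschitz on ℝ. Suppose u₁, u₂ : Ω → ℝ are Lipschitz on Ω, satisfy u₁(x₀) = u₂(x₀) = y₀, and for each i ∈ {1,2}, for almost every x ∈ Ω, uᵢ is differentiable at x with gradient ∇uᵢ(x) = f(uᵢ(x)). Then u₁ = u₂ on Ω. -/
/-!
The difference `w = u₁ - u₂` is Lipschitz on `Ω` and satisfies `‖∇w‖ ≤ K |w|` almost everywhere,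
where `K` is a Lipschitz constant of `f`. The zero set of `w` is relatively closed in `Ω`; it is
also open. Indeed, if `w c = 0` and `K r < 1`, then on the ball `B(c, r)` the supremum `S` of `|w|`
satisfies `‖∇w‖ ≤ K S` a.e., so the mean value inequality gives `S ≤ K S r`, hence `S = 0`.
Connectedness of `Ω` concludes.

The mean value inequality for a Lipschitz function whose gradient is bounded only almost everywhere
(`abs_sub_le_of_ae_fderiv_le`) comes from Fubini: for almost every small translate of the segment,
almost every point of it is a good point, so the fundamental theorem of calculus for absolutely
continuous functions applies on that translate; continuity then yields the segment itself.
-/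

open MeasureTheory

section MeanValue

variable {E : Type*} [NormedAddCommGroup E] [NormedSpace ℝ E]

/-- Mean value inequality along one segment, the derivative being controlled at almost every
parameter. -/
lemma abs_sub_le_of_ae_segment {w : E → ℝ} {s : Set E} (hs : Convex ℝ s) {L : NNReal}
    (hw : LipschitzOnWith L w s) {M : ℝ} {y v : E} (hy : y ∈ s) (hyv : y + v ∈ s)
    (h : ∀ᵐ t : ℝ, y + t • v ∈ s → DifferentiableAt ℝ w (y + t • v) ∧
      ‖fderiv ℝ w (y + t • v)‖ ≤ M) :
    |w (y + v) - w y| ≤ M * ‖v‖ := by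
  have hseg : ∀ t ∈ Set.uIcc (0 : ℝ) 1, y + t • v ∈ s := by
    intro t ht
    rw [Set.uIcc_of_le zero_le_one] at ht
    exact hs.add_smul_mem hy hyv ht
  have hlip : LipschitzOnWith (L * ‖v‖₊) (fun t : ℝ => w (y + t • v)) (Set.uIcc 0 1) := by
    refine hw.comp (f := fun t : ℝ => y + t • v) (LipschitzWith.lipschitzOnWith ?_) hseg
    refine LipschitzWith.of_dist_le_mul fun a b => ?_
    rw [dist_add_left, dist_eq_norm, ← sub_smul, norm_smul, dist_eq_norm, mul_comm, coe_nnnorm]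
  have hftc := hlip.absolutelyContinuousOnInterval.integral_deriv_eq_sub
  have hbound : ‖∫ t in (0 : ℝ)..1, deriv (fun t : ℝ => w (y + t • v)) t‖
      ≤ M * ‖v‖ * |1 - 0| := by
    refine intervalIntegral.norm_integral_le_of_norm_le_const_ae ?_
    filter_upwards [h] with t ht hmem
    obtain ⟨hd, hM⟩ := ht (hseg t (Set.uIoc_subset_uIcc hmem))
    have hline : HasDerivAt (fun t : ℝ => y + t • v) v t := by
      simpa using ((hasDerivAt_id t).smul_const v).const_add y
    have hder := hd.hasFDerivAt.comp_hasDerivAt t hline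
    rw [show deriv (fun t : ℝ => w (y + t • v)) t = fderiv ℝ w (y + t • v) v from hder.deriv]
    exact (ContinuousLinearMap.le_opNorm _ _).trans (by gcongr)
  rw [hftc] at hbound
  simpa using hbound

/-- Mean value inequality for a Lipschitz function on an open convex set, the derivative being
controlled almost everywhere. -/
lemma abs_sub_le_of_ae_fderiv_le [FiniteDimensional ℝ E] [MeasurableSpace E] [BorelSpace E]
    (μ : Measure E) [μ.IsAddHaarMeasure] {w : E → ℝ} {s : Set E} (hs : Convex ℝ s)
    (hso : IsOpen s) {L : NNReal} (hw : LipschitzOnWith L w s) {M : ℝ}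
    (h : ∀ᵐ x ∂μ, x ∈ s → DifferentiableAt ℝ w x ∧ ‖fderiv ℝ w x‖ ≤ M)
    {a b : E} (ha : a ∈ s) (hb : b ∈ s) : |w b - w a| ≤ M * ‖b - a‖ := by
  set v := b - a with hv
  have hav : a + v = b := by rw [hv]; abel
  obtain ⟨T, hT, hTm, hTh⟩ := h.exists_measurable_mem
  have hlines : ∀ᵐ y ∂μ, ∀ᵐ t : ℝ, y + t • v ∈ T := by
    simpa using (ae_ae_add_linearMap_mem_iff (LinearMap.toSpanSingleton ℝ E v) volume μ hTm).2 hT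
  have hdense : ∃ᶠ y in nhds a, ∀ᵐ t : ℝ, y + t • v ∈ T :=
    mem_closure_iff_frequently.1 (Measure.dense_of_ae hlines a)
  have hshift : Filter.Tendsto (fun y => y + v) (nhds a) (nhds b) := by
    have : Continuous fun y : E => y + v := by fun_prop
    simpa only [hav] using this.tendsto a
  have hcont : Filter.Tendsto (fun y => |w (y + v) - w y|) (nhds a) (nhds |w b - w a|) :=
    ((((hw.continuousOn.continuousAt (hso.mem_nhds hb)).tendsto.comp hshift).sub
      (hw.continuousOn.continuousAt (hso.mem_nhds ha)).tendsto)).abs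
  by_contra! hlt
  obtain ⟨y, hyT, ⟨hlt', hys⟩, hyvs⟩ := (hdense.and_eventually
    (((hcont.eventually (lt_mem_nhds hlt)).and (hso.mem_nhds ha)).and
      (hshift (hso.mem_nhds hb)))).exists
  refine absurd (abs_sub_le_of_ae_segment hs hw hys hyvs ?_) (not_le.2 hlt')
  filter_upwards [hyT] with t ht using hTh _ ht

/-- A Lipschitz function with `‖∇w‖ ≤ K |w|` a.e. that vanishes at the center of a ball of radius
`r` with `K r < 1` vanishes on the whole ball. -/
lemma eq_zero_on_ball [FiniteDimensional ℝ E] [MeasurableSpace E] [BorelSpace E]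
    (μ : Measure E) [μ.IsAddHaarMeasure] {w : E → ℝ} {c : E} {r : ℝ} {L K : NNReal}
    (hw : LipschitzOnWith L w (Metric.ball c r)) (hK : K * r < 1) (hc : w c = 0)
    (h : ∀ᵐ x ∂μ, x ∈ Metric.ball c r → DifferentiableAt ℝ w x ∧ ‖fderiv ℝ w x‖ ≤ K * |w x|)
    {x : E} (hx : x ∈ Metric.ball c r) : w x = 0 := by
  have hr : 0 < r := Metric.pos_of_mem_ball hx
  have hcb : c ∈ Metric.ball c r := Metric.mem_ball_self hr
  set A : Set ℝ := (fun z => |w z|) '' Metric.ball c r with hA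
  have hbdd : BddAbove A := by
    refine ⟨L * r, ?_⟩
    rintro _ ⟨z, hz, rfl⟩
    have := hw.dist_le_mul z hz c hcb
    rw [hc, Real.dist_eq, sub_zero] at this
    exact this.trans (by gcongr; exact (Metric.mem_ball.1 hz).le)
  have hle : ∀ z ∈ Metric.ball c r, |w z| ≤ sSup A := fun z hz => le_csSup hbdd ⟨z, hz, rfl⟩
  have hS0 : 0 ≤ sSup A := (abs_nonneg _).trans (hle c hcb)
  have hS : sSup A ≤ K * sSup A * r := by
    refine csSup_le ⟨_, c, hcb, rfl⟩ ?_
    rintro _ ⟨z, hz, rfl⟩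
    have hmv := abs_sub_le_of_ae_fderiv_le μ (convex_ball c r) Metric.isOpen_ball hw
      (M := K * sSup A) (by
        filter_upwards [h] with y hy hyb
        exact ⟨(hy hyb).1, (hy hyb).2.trans (by gcongr; exact hle y hyb)⟩) hcb hz
    rw [hc, sub_zero, ← dist_eq_norm] at hmv
    exact hmv.trans (by gcongr; exact (Metric.mem_ball.1 hz).le)
  have hS1 : sSup A ≤ 0 := by nlinarith
  exact abs_nonpos_iff.1 ((hle x hx).trans hS1)

end MeanValue

/-- Corollary 3.10: for Lipschitz `f : ℝ → ℝⁿ`, there is at most one Lipschitz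
solution to the gradient system `∇u = f(u)` on a domain `Ω ⊆ ℝⁿ` with a given
value `u(x₀) = y₀`. -/
theorem gradient_system_uniqueness (n : ℕ) (hn : 1 ≤ n)
    (Ω : Set (EuclideanSpace ℝ (Fin n))) (hΩopen : IsOpen Ω) (hΩconn : IsConnected Ω)
    (x₀ : EuclideanSpace ℝ (Fin n)) (hx₀ : x₀ ∈ Ω) (y₀ : ℝ)
    (f : ℝ → EuclideanSpace ℝ (Fin n)) (hf : ∃ K : NNReal, LipschitzWith K f)
    (u₁ u₂ : EuclideanSpace ℝ (Fin n) → ℝ)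
    (hu₁Lip : ∃ K : NNReal, LipschitzOnWith K u₁ Ω)
    (hu₂Lip : ∃ K : NNReal, LipschitzOnWith K u₂ Ω)
    (hu₁x₀ : u₁ x₀ = y₀) (hu₂x₀ : u₂ x₀ = y₀)
    (hu₁grad : ∀ᵐ x, x ∈ Ω → HasGradientAt u₁ (f (u₁ x)) x)
    (hu₂grad : ∀ᵐ x, x ∈ Ω → HasGradientAt u₂ (f (u₂ x)) x) :
    Set.EqOn u₁ u₂ Ω := by
  obtain ⟨K, hK⟩ := hf
  obtain ⟨L₁, hL₁⟩ := hu₁Lip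
  obtain ⟨L₂, hL₂⟩ := hu₂Lip
  set w : EuclideanSpace ℝ (Fin n) → ℝ := fun x => u₁ x - u₂ x with hwdef
  have hw : LipschitzOnWith (L₁ + L₂) w Ω := hL₁.sub hL₂
  have hgrad : ∀ᵐ x, x ∈ Ω → DifferentiableAt ℝ w x ∧ ‖fderiv ℝ w x‖ ≤ K * |w x| := by
    filter_upwards [hu₁grad, hu₂grad] with x h₁ h₂ hx
    have hd := (h₁ hx).hasFDerivAt.sub (h₂ hx).hasFDerivAt
    have hd' : HasFDerivAt w _ x := hd
    refine ⟨hd'.differentiableAt, ?_⟩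
    rw [hd'.fderiv, ← map_sub, LinearIsometryEquiv.norm_map, ← dist_eq_norm]
    exact hK.dist_le_mul _ _
  have hsub : Ω ⊆ Ω ∩ {x | w x = 0} := by
    refine hΩconn.isPreconnected.subset_of_closure_inter_subset ?_
      ⟨x₀, hx₀, hx₀, by simp [hwdef, hu₁x₀, hu₂x₀]⟩ ?_
    · rw [Metric.isOpen_iff]
      rintro c ⟨hcΩ, hc⟩
      obtain ⟨ε, hε, hball⟩ := Metric.isOpen_iff.1 hΩopen c hcΩ
      have hK1 : (0 : ℝ) < K + 1 := by positivity
      -- Radius `min ε (1 / (K + 1))` stays in `Ω` and satisfies `K r < 1`.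
      refine ⟨min ε (1 / (K + 1)), by positivity, fun x hx => ?_⟩
      have hsubΩ : Metric.ball c (min ε (1 / ((K : ℝ) + 1))) ⊆ Ω :=
        (Metric.ball_subset_ball (min_le_left _ _)).trans hball
      refine ⟨hsubΩ hx, eq_zero_on_ball volume (hw.mono hsubΩ) (K := K) ?_ hc ?_ hx⟩
      · calc (K : ℝ) * min ε (1 / (K + 1)) ≤ K * (1 / (K + 1)) := by
              gcongr; exact min_le_right _ _
          _ < 1 := by rw [mul_one_div, div_lt_one hK1]; linarith
      · filter_upwards [hgrad] with y hy hyb using hy (hsubΩ hyb)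
    · rintro x ⟨hxcl, hxΩ⟩
      refine ⟨hxΩ, ?_⟩
      by_contra hne
      have hev := (hw.continuousOn.continuousAt (hΩopen.mem_nhds hxΩ)).eventually_ne hne
      obtain ⟨y, ⟨_, hy⟩, hy'⟩ :=
        ((mem_closure_iff_frequently.1 hxcl).and_eventually hev).exists
      exact hy' hy
  intro x hx
  exact sub_eq_zero.1 (hsub hx).2
end

section
/- Let n ≥ 1 and let A be a nonempty closed proper subset of ℝⁿ. There exists a function F : ℝⁿ → ℝ that is C^∞ on the open set ℝⁿ ∖ A such that for every point a in the frontier of A and every radius r > 0, the lower Lebesgue integral ∫_{B(a,r) ∖ A} |F(x)|ⁿ dv is infinite. In particular, F cannot be extended to a function that is Lⁿ-integrable on any neighborhood of any frontier point of A. -/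
open MeasureTheory

/-!
Take a smooth `φ ≥ 0` on `ℝⁿ` whose zero set is exactly `A`, and put `F = 1 / φ²`. Near a frontier
point `a`, `φ` is Lipschitz and vanishes on `A`, so `φ ≤ C · dist(·, A)`. Points `y ∉ A` exist
arbitrarily close to `a`; with `s = dist(y, A)`, the ball `B(y, s)` avoids `A`, and on it
`F ≥ 1 / (2Cs)²`. Hence the integral is at least `(4C²s²)⁻ⁿ · sⁿ · |B(0,1)| = (4C²s)⁻ⁿ |B(0,1)|`,
which is unbounded as `s → 0`.
-/

/-- Corollary 4.1: for any nonempty closed proper subset `A ⊊ ℝⁿ`, there is a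
function `F` smooth on `ℝⁿ ∖ A` such that near every frontier point of `A` the
lower integral of `|F|ⁿ` over `B(a,r) ∖ A` is infinite (so `F` admits no `Lⁿ`
extension across any frontier point of `A`). -/
theorem smooth_function_with_no_Ln_extension (n : ℕ) (hn : 1 ≤ n)
    (A : Set (EuclideanSpace ℝ (Fin n))) (hAclosed : IsClosed A)
    (hAne : A.Nonempty) (hAproper : A ≠ Set.univ) :
    ∃ F : EuclideanSpace ℝ (Fin n) → ℝ,
      ContDiffOn ℝ (⊤ : ℕ∞) F Aᶜ ∧
      ∀ a ∈ frontier A, ∀ r : ℝ, 0 < r →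
        ∫⁻ x in Metric.ball a r \ A, ENNReal.ofReal (|F x| ^ n) = ⊤ := by
  obtain ⟨φ, hsupp, hφ, hrange⟩ := hAclosed.isOpen_compl.exists_contDiff_support_eq (n := (⊤ : ℕ∞))
  have hne : ∀ x, φ x ≠ 0 ↔ x ∉ A := fun x => by
    rw [← Function.mem_support, hsupp, Set.mem_compl_iff]
  refine ⟨fun x => (φ x ^ 2)⁻¹, ?_, ?_⟩
  · exact (hφ.pow 2).contDiffOn.inv fun x hx => pow_ne_zero 2 ((hne x).2 hx)
  intro a ha r hr
  obtain ⟨K, t, ht, hK⟩ :=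
    ((hφ.of_le (by exact_mod_cast le_top)).contDiffAt (x := a)).exists_lipschitzOnWith
  obtain ⟨ρ, hρ, hρt⟩ := Metric.mem_nhds_iff.1 ht
  set C : ℝ := K + 1 with hC
  have hC0 : 0 < C := by positivity
  set V := volume (Metric.ball (0 : EuclideanSpace ℝ (Fin n)) 1) with hV
  have hV0 : V ≠ 0 := (Metric.measure_ball_pos _ _ one_pos).ne'
  refine ENNReal.eq_top_of_forall_nnreal_le fun M => ?_
  obtain ⟨N, hN⟩ := ENNReal.exists_nat_mul_gt hV0 (ENNReal.coe_ne_top (r := M))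
  -- Closeness needed to keep everything inside both balls and to make `(4C²s)⁻¹ ≥ N + 1`.
  obtain ⟨δ, hδ, hδρ, hδr, hδN⟩ : ∃ δ : ℝ, 0 < δ ∧ 2 * δ ≤ ρ ∧ 2 * δ ≤ r ∧
      4 * C ^ 2 * δ * (N + 1) ≤ 1 := by
    refine ⟨min (min (ρ / 2) (r / 2)) (1 / (4 * C ^ 2 * (N + 1))), by positivity, ?_, ?_, ?_⟩
    · linarith [(min_le_left (min (ρ / 2) (r / 2)) (1 / (4 * C ^ 2 * (N + 1)))),
        min_le_left (ρ / 2) (r / 2)]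
    · linarith [(min_le_left (min (ρ / 2) (r / 2)) (1 / (4 * C ^ 2 * (N + 1)))),
        min_le_right (ρ / 2) (r / 2)]
    · have h := min_le_right (min (ρ / 2) (r / 2)) (1 / (4 * C ^ 2 * (N + 1)))
      rw [le_div_iff₀ (by positivity)] at h
      linarith
  have haA : a ∈ A := hAclosed.frontier_subset ha
  obtain ⟨y, hyA, hya⟩ : ∃ y ∈ Aᶜ, dist a y < δ := by
    rw [frontier_eq_closure_inter_closure] at ha
    exact Metric.mem_closure_iff.1 ha.2 δ hδ
  obtain ⟨p, hpA, hp⟩ := hAclosed.exists_infDist_eq_dist hAne y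
  set s := Metric.infDist y A with hs
  have hs0 : 0 < s := (hAclosed.notMem_iff_infDist_pos hAne).1 hyA
  have hsδ : s < δ := (Metric.infDist_le_dist_of_mem haA).trans_lt (by rwa [dist_comm])
  have hsub : Metric.ball y s ⊆ Metric.ball a r \ A := fun x hx => by
    refine ⟨?_, fun hxA => ?_⟩
    · rw [Metric.mem_ball] at hx ⊢
      linarith [dist_triangle x y a, dist_comm a y]
    · have := Metric.infDist_le_dist_of_mem (x := y) hxA
      rw [Metric.mem_ball, dist_comm] at hx
      linarith
  have hpt : p ∈ t := hρt (by
    rw [Metric.mem_ball]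
    linarith [dist_triangle p y a, dist_comm a y, dist_comm p y])
  have hlow : ∀ x ∈ Metric.ball y s,
      ENNReal.ofReal (((2 * C * s) ^ 2)⁻¹ ^ n) ≤ ENNReal.ofReal (|(φ x ^ 2)⁻¹| ^ n) := by
    intro x hx
    have hxA := (hsub hx).2
    rw [Metric.mem_ball] at hx
    have hxt : x ∈ t := hρt (by
      rw [Metric.mem_ball]
      linarith [dist_triangle x y a, dist_comm a y])
    have h1 := hK.dist_le_mul x hxt p hpt
    have hφp : φ p = 0 := by
      by_contra h
      exact (hne p).1 h hpA
    rw [hφp, Real.dist_eq, sub_zero] at h1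
    have h2 : dist x p ≤ 2 * s := by linarith [dist_triangle x y p]
    have h3 : |φ x| ≤ 2 * C * s := by
      have : (K : ℝ) * dist x p ≤ C * (2 * s) := by gcongr; linarith
      linarith
    have h4 : 0 < |φ x| := abs_pos.2 ((hne x).2 hxA)
    rw [abs_inv, abs_pow]
    gcongr
  have hbig : (N : ℝ) ≤ ((2 * C * s) ^ 2)⁻¹ ^ n * s ^ n := by
    have h1 : (N + 1 : ℝ) ≤ ((2 * C * s) ^ 2)⁻¹ * s := by
      have : ((2 * C * s) ^ 2)⁻¹ * s = 1 / (4 * C ^ 2 * s) := by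
        field_simp
        ring
      rw [this, le_div_iff₀ (by positivity)]
      have : 4 * C ^ 2 * s * (N + 1) ≤ 4 * C ^ 2 * δ * (N + 1) := by gcongr
      linarith
    have hN0 : (0 : ℝ) ≤ N := N.cast_nonneg
    rw [← mul_pow]
    have := le_self_pow₀ (by linarith : 1 ≤ ((2 * C * s) ^ 2)⁻¹ * s) (by omega : n ≠ 0)
    linarith
  calc (M : ENNReal) ≤ N * V := hN.le
    _ ≤ ENNReal.ofReal (((2 * C * s) ^ 2)⁻¹ ^ n * s ^ n) * V := by
        gcongr
        rw [← ENNReal.ofReal_natCast]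
        exact ENNReal.ofReal_le_ofReal hbig
    _ = ENNReal.ofReal (((2 * C * s) ^ 2)⁻¹ ^ n) * volume (Metric.ball y s) := by
        rw [Measure.addHaar_ball_of_pos _ _ hs0, finrank_euclideanSpace_fin,
          ENNReal.ofReal_mul (by positivity), mul_assoc]
    _ = ∫⁻ x in Metric.ball y s, ENNReal.ofReal (((2 * C * s) ^ 2)⁻¹ ^ n) := by
        rw [setLIntegral_const]
    _ ≤ ∫⁻ x in Metric.ball y s, ENNReal.ofReal (|(φ x ^ 2)⁻¹| ^ n) :=
        setLIntegral_mono' measurableSet_ball hlow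
    _ ≤ _ := lintegral_mono_set hsub
end

section
/- Let Ω ⊆ ℂ be a nonempty open connected set, z₀ a frontier point of Ω, and u : ℂ → ℂ holomorphic (complex-differentiable) on Ω and nonconstant on Ω. Let W be an open neighborhood of z₀ and ũ : ℂ → ℂ a function that is C^∞ on W (as a function of two real variables), agrees with u on W ∩ Ω, and satisfies ũ(z₀) = 0. If ũ vanishes to finite order at z₀ in the L² sense, then there exists an open neighborhood U of z₀ with U ⊆ W such that ∫_U |∂̄ũ(z)|²/|ũ(z)|² dv < ∞ while the lower Lebesgue integral ∫_U |∂ũ(z)|²/|ũ(z)|² dv is infinite. -/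
/-!
Write `ũ` for `ut`. Since `Ω` is open, `∂̄ũ` vanishes together with all its derivatives on `Ω` near
`z₀`, hence, by continuity, also at `z₀ ∈ closure Ω`. So `∂̄ũ = O(|z - z₀|^m)` for every `m`
(`isBigO_pow_of_eventually_eq_zero`, an induction on `m` with the mean value inequality): the Taylor
series of `ũ` at `z₀` is formally holomorphic.

The class of germs that are smooth at `z₀` and holomorphic on `Ω` near `z₀` (`SmoothHolo`) is stable
under `∂`. By induction along `f ↦ ∂f`, each such `f` either is `O(|z - z₀|^k)` or has a leading term
`b (z - z₀)^j` with `b ≠ 0` and error `O(|z - z₀|^(j+1))` (`isBigO_or_leading_term`). If `∂ũ` had no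
leading term, `ũ` would be `O(|z - z₀|^k)` for every `k` and would vanish to infinite order in the
`L²` sense. Hence `|∂ũ| ≍ |z - z₀|^j` and, as `ũ(z₀) = 0`, `|ũ| ≍ |z - z₀|^(j+1)` near `z₀`.

On a small disc `|∂̄ũ|/|ũ|` is therefore bounded, while `|∂ũ|²/|ũ|²` is at least a positive multiple of
`|z - z₀|⁻²` off `z₀`, which is not integrable in the plane (`lintegral_ball_inv_sq_eq_top`).
-/

open MeasureTheory

/-- The Wirtinger derivative `∂u(z) = (D(1) − i·D(i))/2`, where `D = fderiv ℝ u z`. -/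
noncomputable def wirtingerD (f : ℂ → ℂ) (z : ℂ) : ℂ :=
  (fderiv ℝ f z 1 - Complex.I * fderiv ℝ f z Complex.I) / 2

/-- The Wirtinger derivative `∂̄u(z) = (D(1) + i·D(i))/2`, where `D = fderiv ℝ u z`. -/
noncomputable def wirtingerDBar (f : ℂ → ℂ) (z : ℂ) : ℂ :=
  (fderiv ℝ f z 1 + Complex.I * fderiv ℝ f z Complex.I) / 2

/-- `f` vanishes to infinite order at `z₀` in the `L²` sense:
`r^{-m} ∫_{B(z₀,r)} |f|² → 0` as `r → 0⁺` for every `m ≥ 0`. -/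
def VanishesInfiniteOrder (f : ℂ → ℂ) (z₀ : ℂ) : Prop :=
  ∀ m : ℝ, 0 ≤ m →
    Filter.Tendsto (fun r : ℝ => r ^ (-m) * ∫ z in Metric.ball z₀ r, ‖f z‖ ^ 2)
      (nhdsWithin 0 (Set.Ioi 0)) (nhds 0)

open Filter Topology Asymptotics
open scoped ContDiff

/-! ### Infinite-order vanishing at boundary points -/

/-- Mean value inequality on the disc of radius `|z - z₀|`: a bound on the derivative is integrated
to a bound of one order more on the function. -/
theorem isBigO_pow_succ_of_fderiv {F : Type*} [NormedAddCommGroup F] [NormedSpace ℝ F]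
    {f : ℂ → F} {z₀ : ℂ} {m : ℕ} (hf : ContDiffAt ℝ ∞ f z₀) (h0 : f z₀ = 0)
    (hd : (fderiv ℝ f) =O[𝓝 z₀] fun z => (z - z₀) ^ m) :
    f =O[𝓝 z₀] fun z => (z - z₀) ^ (m + 1) := by
  obtain ⟨C, hC0, hC⟩ := hd.exists_nonneg
  have hdiff : ∀ᶠ z in 𝓝 z₀, DifferentiableAt ℝ f z :=
    ((hf.of_le (by simp : (1 : WithTop ℕ∞) ≤ ∞)).eventually (by simp)).mono
      fun z hz => hz.differentiableAt (by simp)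
  obtain ⟨ε, hε, hball⟩ := Metric.eventually_nhds_iff_ball.1 (hC.bound.and hdiff)
  refine IsBigO.of_bound C ?_
  filter_upwards [Metric.ball_mem_nhds z₀ hε] with z hz
  have hsub : Metric.closedBall z₀ ‖z - z₀‖ ⊆ Metric.ball z₀ ε := by
    apply Metric.closedBall_subset_ball
    simpa [dist_eq_norm] using hz
  have key := (convex_closedBall z₀ ‖z - z₀‖).norm_image_sub_le_of_norm_fderiv_le (𝕜 := ℝ)
    (f := f) (C := C * ‖z - z₀‖ ^ m) (x := z₀) (y := z)
    (fun y hy => (hball y (hsub hy)).2)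
    (fun y hy => by
      refine (hball y (hsub hy)).1.trans ?_
      rw [norm_pow]
      gcongr
      simpa [dist_eq_norm] using hy)
    (by simp) (by simp [dist_eq_norm])
  rw [h0, sub_zero] at key
  rw [norm_pow, pow_succ, ← mul_assoc]
  exact key

theorem eventually_eventually_of_isOpen {Ω : Set ℂ} (hΩ : IsOpen Ω) {z₀ : ℂ} {p : ℂ → Prop}
    (h : ∀ᶠ z in 𝓝[Ω] z₀, p z) : ∀ᶠ z in 𝓝[Ω] z₀, ∀ᶠ w in 𝓝 z, p w := by
  filter_upwards [eventually_eventually_nhdsWithin.2 h, self_mem_nhdsWithin] with z hz hzΩ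
  rwa [hΩ.nhdsWithin_eq hzΩ] at hz

/-- A smooth germ at `z₀ ∈ closure Ω` that vanishes on the open set `Ω` near `z₀` is flat at `z₀`.
The target space varies in the induction, which passes from `g` to `fderiv ℝ g`. -/
theorem isBigO_pow_of_eventually_eq_zero {Ω : Set ℂ} (hΩ : IsOpen Ω) {z₀ : ℂ}
    (hz₀ : z₀ ∈ closure Ω) (m : ℕ) :
    ∀ {F : Type} [NormedAddCommGroup F] [NormedSpace ℝ F] {g : ℂ → F},
      ContDiffAt ℝ ∞ g z₀ → (∀ᶠ z in 𝓝[Ω] z₀, g z = 0) →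
      g =O[𝓝 z₀] fun z => (z - z₀) ^ m := by
  induction m with
  | zero =>
    intro F _ _ g hg _
    simpa using hg.continuousAt.isBigO_one ℂ
  | succ m ih =>
    intro F _ _ g hg h
    have : (𝓝[Ω] z₀).NeBot := mem_closure_iff_nhdsWithin_neBot.1 hz₀
    refine isBigO_pow_succ_of_fderiv hg ?_ (ih (hg.fderiv_right (by simp)) ?_)
    · exact tendsto_nhds_unique (hg.continuousAt.tendsto.mono_left nhdsWithin_le_nhds)
        (tendsto_const_nhds.congr' (h.mono fun z hz => hz.symm))
    · filter_upwards [eventually_eventually_of_isOpen hΩ h] with z hz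
      have : g =ᶠ[𝓝 z] fun _ => 0 := hz
      simp [this.fderiv_eq]

/-! ### Wirtinger derivatives -/

theorem fderiv_apply_eq (f : ℂ → ℂ) (z v : ℂ) :
    fderiv ℝ f z v = wirtingerD f z * v + wirtingerDBar f z * (starRingEnd ℂ) v := by
  have hv : v = v.re + v.im * Complex.I := (Complex.re_add_im v).symm
  have hc : (starRingEnd ℂ) v = v.re - v.im * Complex.I := by
    apply Complex.ext <;> simp
  have key : fderiv ℝ f z v = v.re * fderiv ℝ f z 1 + v.im * fderiv ℝ f z Complex.I := by
    have hv' : v = v.re • (1 : ℂ) + v.im • Complex.I := by simp [Complex.re_add_im]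
    conv_lhs => rw [hv', map_add, map_smul, map_smul]
    simp
  rw [key, hc, wirtingerD, wirtingerDBar]
  linear_combination (-(fderiv ℝ f z 1 - Complex.I * fderiv ℝ f z Complex.I) / 2) * hv +
    (v.im * fderiv ℝ f z Complex.I) * Complex.I_sq

theorem norm_fderiv_le (f : ℂ → ℂ) (z : ℂ) :
    ‖fderiv ℝ f z‖ ≤ ‖wirtingerD f z‖ + ‖wirtingerDBar f z‖ := by
  refine ContinuousLinearMap.opNorm_le_bound _ (by positivity) fun v => ?_
  rw [fderiv_apply_eq, add_mul]
  refine (norm_add_le _ _).trans ?_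
  simp

theorem fderiv_real_apply {f : ℂ → ℂ} {z : ℂ} (h : DifferentiableAt ℂ f z) (v : ℂ) :
    fderiv ℝ f z v = deriv f z * v := by
  rw [h.hasDerivAt.hasFDerivAt.restrictScalars ℝ |>.fderiv]
  simp [mul_comm]

theorem wirtingerD_eq_deriv {f : ℂ → ℂ} {z : ℂ} (h : DifferentiableAt ℂ f z) :
    wirtingerD f z = deriv f z := by
  rw [wirtingerD, fderiv_real_apply h, fderiv_real_apply h]
  linear_combination (-deriv f z / 2) * Complex.I_sq

theorem wirtingerDBar_eq_zero {f : ℂ → ℂ} {z : ℂ} (h : DifferentiableAt ℂ f z) :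
    wirtingerDBar f z = 0 := by
  rw [wirtingerDBar, fderiv_real_apply h, fderiv_real_apply h]
  linear_combination (deriv f z / 2) * Complex.I_sq

theorem contDiffAt_wirtingerD {f : ℂ → ℂ} {z₀ : ℂ} (hf : ContDiffAt ℝ ∞ f z₀) :
    ContDiffAt ℝ ∞ (wirtingerD f) z₀ := by
  have h : ContDiffAt ℝ ∞ (fderiv ℝ f) z₀ := hf.fderiv_right (by simp)
  exact ((h.clm_apply contDiffAt_const).sub
    (contDiffAt_const.mul (h.clm_apply contDiffAt_const))).div_const 2

theorem contDiffAt_wirtingerDBar {f : ℂ → ℂ} {z₀ : ℂ} (hf : ContDiffAt ℝ ∞ f z₀) :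
    ContDiffAt ℝ ∞ (wirtingerDBar f) z₀ := by
  have h : ContDiffAt ℝ ∞ (fderiv ℝ f) z₀ := hf.fderiv_right (by simp)
  exact ((h.clm_apply contDiffAt_const).add
    (contDiffAt_const.mul (h.clm_apply contDiffAt_const))).div_const 2

/-! ### Leading terms -/

/-- The germ of `f` at `z₀` is smooth in the real sense, and `f` is holomorphic at the points of `Ω`
close to `z₀`. -/
structure SmoothHolo (Ω : Set ℂ) (z₀ : ℂ) (f : ℂ → ℂ) : Prop where
  smooth : ContDiffAt ℝ ∞ f z₀
  holo : ∀ᶠ z in 𝓝[Ω] z₀, DifferentiableAt ℂ f z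

section
variable {Ω : Set ℂ} {z₀ : ℂ} {f : ℂ → ℂ}

theorem SmoothHolo.wirtingerD (hΩ : IsOpen Ω) (hf : SmoothHolo Ω z₀ f) :
    SmoothHolo Ω z₀ (wirtingerD f) := by
  refine ⟨contDiffAt_wirtingerD hf.smooth, ?_⟩
  filter_upwards [eventually_eventually_of_isOpen hΩ hf.holo] with z hz
  have h1 : _root_.wirtingerD f =ᶠ[𝓝 z] deriv f := hz.mono fun w hw => wirtingerD_eq_deriv hw
  have h2 : AnalyticAt ℂ f z := Complex.analyticAt_iff_eventually_differentiableAt.2 hz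
  exact h2.deriv.differentiableAt.congr_of_eventuallyEq h1

/-- `∂̄f` is flat at `z₀`. -/
theorem SmoothHolo.wirtingerDBar_isBigO (hΩ : IsOpen Ω) (hz₀ : z₀ ∈ closure Ω)
    (hf : SmoothHolo Ω z₀ f) (m : ℕ) :
    wirtingerDBar f =O[𝓝 z₀] fun z => (z - z₀) ^ m :=
  isBigO_pow_of_eventually_eq_zero hΩ hz₀ m (contDiffAt_wirtingerDBar hf.smooth)
    (hf.holo.mono fun _ hz => wirtingerDBar_eq_zero hz)

theorem isBigO_pow_succ_of_wirtinger {m : ℕ} (hf : ContDiffAt ℝ ∞ f z₀) (h0 : f z₀ = 0)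
    (hD : wirtingerD f =O[𝓝 z₀] fun z => (z - z₀) ^ m)
    (hDB : wirtingerDBar f =O[𝓝 z₀] fun z => (z - z₀) ^ m) :
    f =O[𝓝 z₀] fun z => (z - z₀) ^ (m + 1) := by
  refine isBigO_pow_succ_of_fderiv hf h0 ?_
  refine IsBigO.trans (IsBigO.of_bound 1 (Eventually.of_forall fun z => ?_))
    (hD.norm_left.add hDB.norm_left)
  rw [one_mul]
  exact (norm_fderiv_le f z).trans (le_abs_self _)

/-- Integration of a leading term of `∂f`: apply the mean value estimate to
`f - b / (j + 1) * (z - z₀) ^ (j + 1)`, whose `∂̄` equals `∂̄f` and so is flat. -/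
theorem sub_monomial_isBigO (hΩ : IsOpen Ω) (hz₀ : z₀ ∈ closure Ω)
    (hf : SmoothHolo Ω z₀ f) (h0 : f z₀ = 0) {j : ℕ} {b : ℂ}
    (hD : (fun z => wirtingerD f z - b * (z - z₀) ^ j) =O[𝓝 z₀] fun z => (z - z₀) ^ (j + 1)) :
    (fun z => f z - b / (j + 1) * (z - z₀) ^ (j + 1)) =O[𝓝 z₀]
      fun z => (z - z₀) ^ (j + 2) := by
  set p : ℂ → ℂ := fun z => b / (j + 1) * (z - z₀) ^ (j + 1) with hp
  have hpd : ∀ z, HasDerivAt p (b * (z - z₀) ^ j) z := fun z => by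
    have h := (((hasDerivAt_id z).sub_const z₀).pow (j + 1)).const_mul (b / (j + 1))
    have : (j : ℂ) + 1 ≠ 0 := Nat.cast_add_one_ne_zero j
    refine h.congr_deriv ?_
    simp
    field_simp
  have hps : ContDiffAt ℝ ∞ p z₀ := by fun_prop
  have hdiff : ∀ᶠ z in 𝓝 z₀, fderiv ℝ (fun z => f z - p z) z = fderiv ℝ f z - fderiv ℝ p z := by
    filter_upwards [(hf.smooth.of_le (by simp : (1 : WithTop ℕ∞) ≤ ∞)).eventually (by simp)]
      with z hz
    exact fderiv_fun_sub (hz.differentiableAt (by simp))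
      ((hpd z).differentiableAt.restrictScalars ℝ)
  refine isBigO_pow_succ_of_wirtinger (hf.smooth.sub hps) (by simp [h0]) ?_ ?_
  · refine hD.congr' ?_ EventuallyEq.rfl
    filter_upwards [hdiff] with z hz
    change _ = wirtingerD (fun z => f z - p z) z
    rw [← (hpd z).deriv, ← wirtingerD_eq_deriv (hpd z).differentiableAt]
    simp only [wirtingerD, hz, sub_apply]
    ring
  · refine (hf.wirtingerDBar_isBigO hΩ hz₀ (j + 1)).congr' ?_ EventuallyEq.rfl
    filter_upwards [hdiff] with z hz
    change _ = wirtingerDBar (fun z => f z - p z) z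
    have := wirtingerDBar_eq_zero (hpd z).differentiableAt
    rw [← sub_zero (wirtingerDBar f z), ← this]
    simp only [wirtingerDBar, hz, sub_apply]
    ring

/-- Either `f` vanishes at `z₀` to order at least `k`, or it has a nonzero holomorphic leading
term. -/
theorem isBigO_or_leading_term (hΩ : IsOpen Ω) (hz₀ : z₀ ∈ closure Ω) (k : ℕ) :
    ∀ {f : ℂ → ℂ}, SmoothHolo Ω z₀ f →
      (f =O[𝓝 z₀] fun z => (z - z₀) ^ k) ∨
      ∃ (j : ℕ) (b : ℂ), b ≠ 0 ∧
        (fun z => f z - b * (z - z₀) ^ j) =O[𝓝 z₀] fun z => (z - z₀) ^ (j + 1) := by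
  induction k with
  | zero =>
    intro f hf
    left
    simpa using hf.smooth.continuousAt.isBigO_one ℂ
  | succ k ih =>
    intro f hf
    by_cases h0 : f z₀ = 0
    · rcases ih (hf.wirtingerD hΩ) with h | ⟨j, b, hb, h⟩
      · exact Or.inl (isBigO_pow_succ_of_wirtinger hf.smooth h0 h
          (hf.wirtingerDBar_isBigO hΩ hz₀ k))
      · exact Or.inr ⟨j + 1, b / (j + 1), div_ne_zero hb (Nat.cast_add_one_ne_zero j),
          sub_monomial_isBigO hΩ hz₀ hf h0 h⟩
    · refine Or.inr ⟨0, f z₀, h0, ?_⟩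
      simpa using (hf.smooth.differentiableAt (by simp)).isBigO_sub

theorem isTheta_of_sub_monomial {j : ℕ} {b : ℂ} (hb : b ≠ 0)
    (h : (fun z => f z - b * (z - z₀) ^ j) =O[𝓝 z₀] fun z => (z - z₀) ^ (j + 1)) :
    f =Θ[𝓝 z₀] fun z => (z - z₀) ^ j := by
  have h1 : (fun z => (z - z₀) ^ (j + 1)) =o[𝓝 z₀] fun z => b * (z - z₀) ^ j := by
    rw [isLittleO_const_mul_right_iff hb]
    have ht : Tendsto (fun z : ℂ => z - z₀) (𝓝 z₀) (𝓝 0) := by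
      have : Continuous fun z : ℂ => z - z₀ := by fun_prop
      simpa using this.tendsto z₀
    have := ((isLittleO_one_iff ℂ).2 ht).mul_isBigO (isBigO_refl (fun z => (z - z₀) ^ j) (𝓝 z₀))
    simpa [pow_succ'] using this
  have h2 : f ~[𝓝 z₀] fun z => b * (z - z₀) ^ j := h.trans_isLittleO h1
  exact h2.isTheta.trans ((isTheta_const_mul_left hb).2 (isTheta_refl _ _))
end

/-! ### Integral estimates -/

theorem vanishesInfiniteOrder_of_isBigO {f : ℂ → ℂ} {z₀ : ℂ}
    (h : ∀ k : ℕ, f =O[𝓝 z₀] fun z => (z - z₀) ^ k) : VanishesInfiniteOrder f z₀ := by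
  intro m hm
  obtain ⟨k, hk⟩ := exists_nat_gt m
  obtain ⟨C, hC0, hC⟩ := (h k).exists_nonneg
  obtain ⟨ε, hε, hball⟩ := Metric.eventually_nhds_iff_ball.1 hC.bound
  have hlim : Tendsto (fun r : ℝ => C ^ 2 * Real.pi * r ^ (2 * k + 2 - m)) (𝓝[>] 0) (𝓝 0) := by
    have : ContinuousAt (fun r : ℝ => C ^ 2 * Real.pi * r ^ (2 * k + 2 - m)) 0 :=
      continuousAt_const.mul (Real.continuousAt_rpow_const _ _ (Or.inr (by linarith)))
    have h2 := this.tendsto.mono_left (nhdsWithin_le_nhds (s := Set.Ioi 0))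
    have hne : (2 * k + 2 - m : ℝ) ≠ 0 := by linarith
    simpa [Real.zero_rpow hne] using h2
  refine squeeze_zero_norm' ?_ hlim
  filter_upwards [Ioo_mem_nhdsGT hε] with r ⟨hr0, hrε⟩
  have hb : ‖∫ z in Metric.ball z₀ r, ‖f z‖ ^ 2‖ ≤
      (C * r ^ k) ^ 2 * volume.real (Metric.ball z₀ r) := by
    refine norm_setIntegral_le_of_norm_le_const measure_ball_lt_top fun z hz => ?_
    rw [norm_pow, norm_norm]
    have h1 := hball z (Metric.ball_subset_ball hrε.le hz)
    rw [norm_pow] at h1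
    have h2 : ‖z - z₀‖ ≤ r := by
      rw [← dist_eq_norm]; exact (Metric.mem_ball.1 hz).le
    gcongr
    exact h1.trans (by gcongr)
  have hvol : volume.real (Metric.ball z₀ r) = r ^ 2 * Real.pi := by
    simp [Measure.real, Complex.volume_ball, ENNReal.toReal_mul, ENNReal.toReal_ofReal hr0.le]
  rw [hvol] at hb
  rw [norm_mul, Real.norm_of_nonneg (Real.rpow_nonneg hr0.le _)]
  calc r ^ (-m) * _ ≤ r ^ (-m) * ((C * r ^ k) ^ 2 * (r ^ 2 * Real.pi)) := by gcongr
    _ = C ^ 2 * Real.pi * (r ^ (2 * k + 2) * r ^ (-m)) := by ring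
    _ = _ := by
      rw [← Real.rpow_natCast r (2 * k + 2), ← Real.rpow_add hr0]
      push_cast
      rfl

/-- In polar coordinates the integral becomes a multiple of `∫₀^r dt / t`. -/
theorem lintegral_ball_inv_sq_eq_top (z₀ : ℂ) {r : ℝ} (hr : 0 < r) :
    ∫⁻ z in Metric.ball z₀ r, ENNReal.ofReal ((‖z - z₀‖ ^ 2)⁻¹) = ⊤ := by
  have h0 : ∫⁻ z in Metric.ball (0 : ℂ) r, ENNReal.ofReal ((‖z‖ ^ 2)⁻¹) = ⊤ := by
    by_contra hne
    have hmeas : AEStronglyMeasurable (fun z : ℂ => (‖z‖ ^ 2)⁻¹)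
        (volume.restrict (Metric.ball 0 r)) := by
      have : Measurable (fun z : ℂ => (‖z‖ ^ 2)⁻¹) := by fun_prop
      exact this.aestronglyMeasurable
    have hint : IntegrableOn (fun z : ℂ => (‖z‖ ^ 2)⁻¹) (Metric.ball 0 r) :=
      (lintegral_ofReal_ne_top_iff_integrable hmeas
        (Eventually.of_forall fun z => by positivity)).1 hne
    rw [integrableOn_fun_norm_addHaar volume (f := fun y : ℝ => (y ^ 2)⁻¹)] at hint
    have h2 : IntegrableOn (fun y : ℝ => y⁻¹) (Set.Ioo 0 r) := by
      refine hint.congr_fun (fun y hy => ?_) measurableSet_Ioo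
      have : y ≠ 0 := hy.1.ne'
      simp
      field_simp
    have h3 : IntervalIntegrable (fun y : ℝ => y⁻¹) volume 0 r := by
      rw [intervalIntegrable_iff_integrableOn_Ioo_of_le hr.le]
      exact h2
    rw [intervalIntegrable_inv_iff] at h3
    simp [hr.ne, hr.le] at h3
  have hpre : (fun z : ℂ => z - z₀) ⁻¹' Metric.ball 0 r = Metric.ball z₀ r := by
    ext z; simp [dist_eq_norm]
  rw [← h0, ← hpre]
  exact (measurePreserving_sub_right volume z₀).setLIntegral_comp_preimage_emb
    (measurableEmbedding_subRight z₀) (fun z => ENNReal.ofReal ((‖z‖ ^ 2)⁻¹)) _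

/-- Proposition 5.2(1): a smooth extension `ũ` across a boundary point `z₀` of a
nonconstant holomorphic function, with `ũ(z₀) = 0` vanishing to finite order,
satisfies `∫_U |∂̄ũ|²/|ũ|² < ∞` and `∫_U |∂ũ|²/|ũ|² = ∞` on some neighborhood `U`
of `z₀`. -/
theorem finite_order_divergence_characterization
    (Ω : Set ℂ) (hΩopen : IsOpen Ω) (hΩconn : IsConnected Ω)
    (z₀ : ℂ) (hz₀ : z₀ ∈ frontier Ω)
    (u : ℂ → ℂ) (hu : DifferentiableOn ℂ u Ω)
    (hnonconst : ¬ ∃ c : ℂ, Set.EqOn u (fun _ => c) Ω)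
    (W : Set ℂ) (hWopen : IsOpen W) (hz₀W : z₀ ∈ W)
    (ut : ℂ → ℂ) (hsmooth : ContDiffOn ℝ (⊤ : ℕ∞) ut W)
    (hagree : Set.EqOn ut u (W ∩ Ω)) (hut0 : ut z₀ = 0)
    (hfin : ¬ VanishesInfiniteOrder ut z₀) :
    ∃ U : Set ℂ, IsOpen U ∧ z₀ ∈ U ∧ U ⊆ W ∧
      (∫⁻ z in U, ENNReal.ofReal (‖wirtingerDBar ut z‖ ^ 2 / ‖ut z‖ ^ 2) < ⊤) ∧
      ∫⁻ z in U, ENNReal.ofReal (‖wirtingerD ut z‖ ^ 2 / ‖ut z‖ ^ 2) = ⊤ := by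
  have hcl : z₀ ∈ closure Ω := frontier_subset_closure hz₀
  have hW : W ∈ 𝓝 z₀ := hWopen.mem_nhds hz₀W
  have hf : SmoothHolo Ω z₀ ut := by
    refine ⟨hsmooth.contDiffAt hW, ?_⟩
    filter_upwards [self_mem_nhdsWithin, mem_nhdsWithin_of_mem_nhds hW] with z hzΩ hzW
    refine (hu.differentiableAt (hΩopen.mem_nhds hzΩ)).congr_of_eventuallyEq ?_
    exact hagree.eventuallyEq_of_mem ((hWopen.inter hΩopen).mem_nhds ⟨hzW, hzΩ⟩)
  obtain ⟨j, b, hb, hD⟩ : ∃ (j : ℕ) (b : ℂ), b ≠ 0 ∧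
      (fun z => wirtingerD ut z - b * (z - z₀) ^ j) =O[𝓝 z₀] fun z => (z - z₀) ^ (j + 1) := by
    by_contra hno
    have hall : ∀ k : ℕ, wirtingerD ut =O[𝓝 z₀] fun z => (z - z₀) ^ k := fun k =>
      (isBigO_or_leading_term hΩopen hcl k (hf.wirtingerD hΩopen)).resolve_right hno
    refine hfin (vanishesInfiniteOrder_of_isBigO fun k => ?_)
    cases k with
    | zero => simpa using hf.smooth.continuousAt.isBigO_one ℂ
    | succ k =>
      exact isBigO_pow_succ_of_wirtinger hf.smooth hut0 (hall k)
        (hf.wirtingerDBar_isBigO hΩopen hcl k)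
  have hDΘ := isTheta_of_sub_monomial hb hD
  have hutΘ := isTheta_of_sub_monomial (div_ne_zero hb (Nat.cast_add_one_ne_zero j))
    (sub_monomial_isBigO hΩopen hcl hf hut0 hD)
  obtain ⟨A, hA⟩ := ((hf.wirtingerDBar_isBigO hΩopen hcl (j + 1)).trans hutΘ.2).bound
  -- `|ũ| = O(|z - z₀|^(j+1))` and `|z - z₀|^j = O(|∂ũ|)`; the constant `B` below controls the second
  -- integrand from below.
  have hmul : ut =O[𝓝 z₀] fun z => (z - z₀) * wirtingerD ut z := by
    refine hutΘ.1.trans ?_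
    simpa only [pow_succ'] using (isBigO_refl (fun z : ℂ => z - z₀) (𝓝 z₀)).mul hDΘ.2
  obtain ⟨B, hB0, hB⟩ := hmul.exists_pos
  -- The lower bound on `|ũ|` rules out zeros other than `z₀`, where the quotient would be `0`.
  obtain ⟨E, hE0, hE⟩ := hutΘ.2.exists_pos
  obtain ⟨r, hr, hball⟩ := Metric.eventually_nhds_iff_ball.1
    (((hA.and hB.bound).and hE.bound).and hW)
  refine ⟨Metric.ball z₀ r, Metric.isOpen_ball, Metric.mem_ball_self hr,
    fun z hz => (hball z hz).2, ?_, ?_⟩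
  · refine setLIntegral_lt_top_of_le_nnreal measure_ball_lt_top.ne ⟨(A ^ 2).toNNReal, ?_⟩
    intro z hz
    refine ENNReal.ofReal_le_ofReal ?_
    refine div_le_of_le_mul₀ (by positivity) (by positivity) ?_
    rw [← mul_pow]
    gcongr
    exact (hball z hz).1.1.1
  · rw [eq_top_iff]
    have hc : ENNReal.ofReal ((B ^ 2)⁻¹) ≠ 0 := by
      rw [Ne, ENNReal.ofReal_eq_zero, not_le]; positivity
    calc (⊤ : ENNReal) = ENNReal.ofReal ((B ^ 2)⁻¹) *
          ∫⁻ z in Metric.ball z₀ r, ENNReal.ofReal ((‖z - z₀‖ ^ 2)⁻¹) := by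
          rw [lintegral_ball_inv_sq_eq_top z₀ hr, ENNReal.mul_top hc]
      _ = ∫⁻ z in Metric.ball z₀ r,
          ENNReal.ofReal ((B ^ 2)⁻¹) * ENNReal.ofReal ((‖z - z₀‖ ^ 2)⁻¹) := by
          rw [lintegral_const_mul' _ _ ENNReal.ofReal_ne_top]
      _ ≤ _ := by
          refine setLIntegral_mono' measurableSet_ball fun z hz => ?_
          rw [← ENNReal.ofReal_mul (by positivity)]
          refine ENNReal.ofReal_le_ofReal ?_
          obtain ⟨⟨⟨-, h1⟩, h2⟩, -⟩ := hball z hz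
          rcases eq_or_ne z z₀ with rfl | hne
          · simp; positivity
          have hpos : 0 < ‖z - z₀‖ := norm_pos_iff.2 (sub_ne_zero.2 hne)
          have hutpos : 0 < ‖ut z‖ := by
            by_contra hcon
            have : ‖ut z‖ = 0 := le_antisymm (not_lt.1 hcon) (norm_nonneg _)
            rw [this, mul_zero, norm_pow] at h2
            exact absurd h2 (not_le.2 (by positivity))
          rw [norm_mul] at h1
          rw [← mul_inv, inv_eq_one_div, div_le_div_iff₀ (by positivity) (by positivity),
            one_mul]
          calc ‖ut z‖ ^ 2 ≤ (B * (‖z - z₀‖ * ‖wirtingerD ut z‖)) ^ 2 := by gcongr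
            _ = _ := by ring
end
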